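/- arXiv:1908.01663 — 8 statements merged into one kernel-verified Lean document; each statement's English description precedes it below -/
import Mathlib

section
/- There exists a constant C > 0 such that for every φ ∈ [0, 2π] and every β ∈ ℝ with |β| ≥ 1 one has |𝒵(β, φ)| ≤ C e^{−|β|/2}. -/
/-!
The point is that `coth w → ±1` exponentially fast as `Re w → ±∞`, uniformly in `Im w`:
for `Re w > 0` one has `coth w - 1 = 2 e^{-2w} / (1 - e^{-2w})`, which for `Re w ≥ 1/4` has norm
at most `6 e^{-2 Re w}`. The case `Re w ≤ -1/4` follows because `coth` is odd.

The kernel is an alternating sum of four values of `coth`, at points which all have real part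
`β / 4`. The limits `±1` cancel, and `e^{-2 |β| / 4} = e^{-|β| / 2}` is the claimed rate, with
constant `4 * 6 = 24`.
-/

open Real MeasureTheory Set Filter

/-- Complex hyperbolic cotangent. -/
noncomputable def ccoth (z : ℂ) : ℂ := Complex.cosh z / Complex.sinh z

/-- The function `U` from the Sommerfeld kernel construction. -/
noncomputable def Ufun (α : ℝ) (ζ : ℂ) : ℂ :=
  ccoth ((1/4 : ℂ) * (ζ - Complex.I * (π/2 : ℝ) + Complex.I * (α : ℝ))) -
  ccoth ((1/4 : ℂ) * (ζ - Complex.I * (π/2 : ℝ) - Complex.I * (α : ℝ)))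

/-- The function `Z`. -/
noncomputable def Zfun (α : ℝ) (z : ℂ) : ℂ :=
  -Ufun α (z - Complex.I * (π/2 : ℝ)) + Ufun α (z - Complex.I * (5*π/2 : ℝ))

/-- The Sommerfeld-type kernel `𝒵(β, φ) = Z(β + 2πi − iφ)`. -/
noncomputable def Zker (α : ℝ) (β φ : ℝ) : ℂ :=
  Zfun α ((β : ℂ) + 2*(π : ℝ)*Complex.I - Complex.I * (φ : ℝ))

/-- The constant `6` is `2 / (1 - 2/3)`, using `e^{-2 Re w} ≤ e^{-1/2} ≤ 2/3`. -/
lemma norm_ccoth_sub_one_le (w : ℂ) (hw : 1/4 ≤ w.re) :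
    ‖ccoth w - 1‖ ≤ 6 * Real.exp (-2 * w.re) := by
  set q : ℂ := Complex.exp (-2 * w) with hq
  have hnorm : ‖q‖ = Real.exp (-2 * w.re) := by
    rw [hq, Complex.norm_exp]
    simp
  have hsmall : ‖q‖ ≤ 2/3 := by
    rw [hnorm]
    have h1 : Real.exp (-2 * w.re) ≤ Real.exp (-(1/2)) := Real.exp_le_exp.mpr (by linarith)
    have h2 : (1/2 : ℝ) + 1 ≤ Real.exp (1/2) := Real.add_one_le_exp _
    have h3 : Real.exp (-(1/2)) ≤ 2/3 := by
      rw [Real.exp_neg]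
      calc (Real.exp (1/2))⁻¹ ≤ ((1/2 : ℝ) + 1)⁻¹ := inv_anti₀ (by norm_num) h2
        _ = 2/3 := by norm_num
    exact h1.trans h3
  have hden : 1/3 ≤ ‖1 - q‖ := by
    have := norm_sub_norm_le (1 : ℂ) q
    rw [norm_one] at this
    linarith
  have hden0 : 1 - q ≠ 0 := by
    intro h
    rw [h, norm_zero] at hden
    norm_num at hden
  have hE : Complex.exp w ≠ 0 := Complex.exp_ne_zero w
  have hneg : Complex.exp (-w) = Complex.exp w * q := by
    rw [hq, ← Complex.exp_add]
    congr 1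
    ring
  have hform : ccoth w - 1 = 2 * q / (1 - q) := by
    have hs : Complex.sinh w = Complex.exp w * (1 - q) / 2 := by
      rw [Complex.sinh, hneg]
      ring
    have hc : Complex.cosh w = Complex.exp w * (1 + q) / 2 := by
      rw [Complex.cosh, hneg]
      ring
    rw [ccoth, hs, hc]
    field_simp
    ring
  rw [hform, norm_div, norm_mul, ← hnorm, div_le_iff₀ (by linarith)]
  have h2 : ‖(2 : ℂ)‖ = 2 := by norm_num
  rw [h2]
  nlinarith [norm_nonneg q]

lemma ccoth_neg (w : ℂ) : ccoth (-w) = -ccoth w := by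
  rw [ccoth, ccoth, Complex.cosh_neg, Complex.sinh_neg, div_neg]

/-- The limit `s = ±1` depends only on `β`, so it cancels between points with the same real
part. -/
lemma exists_norm_ccoth_sub_le (β : ℝ) (hβ : 1 ≤ |β|) :
    ∃ s : ℂ, ∀ w : ℂ, w.re = β / 4 → ‖ccoth w - s‖ ≤ 6 * Real.exp (-|β| / 2) := by
  rcases le_total 0 β with h | h
  · rw [abs_of_nonneg h] at hβ ⊢
    refine ⟨1, fun w hw => (norm_ccoth_sub_one_le w (by linarith)).trans_eq ?_⟩
    rw [hw]
    ring_nf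
  · rw [abs_of_nonpos h] at hβ ⊢
    refine ⟨-1, fun w hw => ?_⟩
    have key := norm_ccoth_sub_one_le (-w) (by rw [Complex.neg_re]; linarith)
    have hflip : ccoth w - -1 = -(ccoth (-w) - 1) := by
      rw [ccoth_neg]
      ring
    rw [hflip, norm_neg]
    refine key.trans_eq ?_
    rw [Complex.neg_re, hw]
    ring_nf

/-- Exponential decay of the kernel `𝒵` for `|β| ≥ 1`, uniformly in `φ ∈ [0, 2π]`. -/
theorem Zker_exp_decay (α : ℝ) (hα : α ∈ Set.Ioo (π/2) π) :
    ∃ C > 0, ∀ φ ∈ Set.Icc (0:ℝ) (2*π), ∀ β : ℝ, 1 ≤ |β| →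
      ‖Zker α β φ‖ ≤ C * Real.exp (-|β|/2) := by
  refine ⟨24, by norm_num, fun φ _ β hβ => ?_⟩
  obtain ⟨s, hs⟩ := exists_norm_ccoth_sub_le β hβ
  have hU : ∀ ζ : ℂ, ζ.re = β → ‖Ufun α ζ‖ ≤ 12 * Real.exp (-|β|/2) := by
    intro ζ hζ
    have h1 := hs ((1/4 : ℂ) * (ζ - Complex.I * (π/2 : ℝ) + Complex.I * (α : ℝ)))
      (by simp [Complex.mul_re, hζ]; ring)
    have h2 := hs ((1/4 : ℂ) * (ζ - Complex.I * (π/2 : ℝ) - Complex.I * (α : ℝ)))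
      (by simp [Complex.mul_re, hζ]; ring)
    rw [Ufun, ← sub_sub_sub_cancel_right _ _ s]
    refine (norm_sub_le _ _).trans ?_
    linarith
  rw [Zker, Zfun]
  refine (norm_add_le _ _).trans ?_
  rw [norm_neg]
  have h1 := hU ((β : ℂ) + 2*(π : ℝ)*Complex.I - Complex.I * (φ : ℝ) - Complex.I * (π/2 : ℝ))
    (by simp [Complex.mul_re])
  have h2 := hU ((β : ℂ) + 2*(π : ℝ)*Complex.I - Complex.I * (φ : ℝ) - Complex.I * (5*π/2 : ℝ))
    (by simp [Complex.mul_re])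
  linarith
end

section
/- There exists a constant C > 0 such that for every φ ∈ [0, 2π] and every β ∈ ℝ with |β| ≥ 1 one has |Z′(β + 2πi − iφ)| ≤ C e^{−|β|/2}, where Z′ denotes the complex derivative of Z; equivalently, |∂_φ 𝒵(β, φ)| ≤ C e^{−|β|/2} for |β| ≥ 1. -/
/-!
Each of the four `coth` terms making up `Z` decays on its own. Since `coth′ = -1 / sinh²`, it
contributes at most `(1/4) / |sinh w|²` to `|Z′|`, where `Re w = β / 4`: the shifts are purely
imaginary. The bound `|sinh w| ≥ sinh |Re w| ≥ e^{|β|/4} / 6`, valid for `|β| ≥ 1`, depends only on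
`Re w` and is therefore uniform in `φ`; it also keeps `w` away from the poles of `coth`.
Summing the four terms gives the constant `36`.
-/

open Real MeasureTheory Set Filter

/-- The reverse triangle inequality for `2 sinh w = e^w - e^{-w}` gives
`|sinh w| ≥ sinh |Re w|`; the factor `1/6` comes from `e^{-2|Re w|} ≤ e^{-1/2} ≤ 2/3`. -/
lemma exp_abs_re_le_norm_sinh (w : ℂ) (hw : 1/4 ≤ |w.re|) :
    Real.exp |w.re| / 6 ≤ ‖Complex.sinh w‖ := by
  have key : ∀ x : ℝ, 1/4 ≤ x → Real.exp x / 3 ≤ Real.exp x - Real.exp (-x) := by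
    intro x hx
    have h1 : 3/2 ≤ Real.exp (2*x) := by linarith [Real.add_one_le_exp (2*x)]
    have h2 : Real.exp x = Real.exp (2*x) * Real.exp (-x) := by
      rw [← Real.exp_add]; ring_nf
    nlinarith [Real.exp_pos (-x)]
  have h2 : Complex.exp w - Complex.exp (-w) = 2 * Complex.sinh w :=
    (Complex.two_sinh w).symm
  have h3 : ‖Complex.exp w - Complex.exp (-w)‖ = 2 * ‖Complex.sinh w‖ := by
    rw [h2, norm_mul]; simp
  have h4 := norm_sub_norm_le (Complex.exp w) (Complex.exp (-w))
  have h5 := norm_sub_norm_le (Complex.exp (-w)) (Complex.exp w)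
  rw [norm_sub_rev (Complex.exp (-w))] at h5
  rw [h3] at h4 h5
  simp only [Complex.norm_exp, Complex.neg_re] at h4 h5
  rcases abs_cases w.re with ⟨h, _⟩ | ⟨h, _⟩
  · rw [h] at hw ⊢
    linarith [key _ hw]
  · rw [h] at hw ⊢
    have := key _ hw
    rw [neg_neg] at this
    linarith

lemma hasDerivAt_ccoth {w : ℂ} (hw : Complex.sinh w ≠ 0) :
    HasDerivAt ccoth (-1 / Complex.sinh w ^ 2) w := by
  have h := (Complex.hasDerivAt_cosh w).div (Complex.hasDerivAt_sinh w) hw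
  have e : Complex.sinh w * Complex.sinh w - Complex.cosh w * Complex.cosh w = -1 := by
    linear_combination -Complex.cosh_sq_sub_sinh_sq w
  rw [e] at h
  exact h

/-- The decay estimate for one `coth` term of `Z`, with `f` standing for its affine argument. -/
lemma ccoth_comp_deriv_decay {f : ℂ → ℂ} {z : ℂ} {β : ℝ} (hβ : 1 ≤ |β|)
    (hf : HasDerivAt f (1/4) z) (hre : (f z).re = β / 4) :
    ∃ d, HasDerivAt (fun z => ccoth (f z)) d z ∧ ‖d‖ ≤ 9 * Real.exp (-|β|/2) := by
  have habs : |(f z).re| = |β| / 4 := by rw [hre, abs_div]; norm_num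
  have hs := exp_abs_re_le_norm_sinh (f z) (by rw [habs]; linarith)
  rw [habs] at hs
  have hpos := Real.exp_pos (|β|/4)
  have hne : Complex.sinh (f z) ≠ 0 := norm_pos_iff.mp (by linarith)
  refine ⟨_, (hasDerivAt_ccoth hne).comp z hf, ?_⟩
  have hn : ‖-1 / Complex.sinh (f z) ^ 2 * (1/4)‖ = 1 / (4 * ‖Complex.sinh (f z)‖ ^ 2) := by
    simp
  have he : Real.exp (-|β|/2) = 1 / Real.exp (|β|/4) ^ 2 := by
    rw [← Real.exp_nat_mul, one_div, ← Real.exp_neg]; push_cast; ring_nf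
  rw [hn, he]
  calc 1 / (4 * ‖Complex.sinh (f z)‖ ^ 2) ≤ 1 / (4 * (Real.exp (|β|/4) / 6) ^ 2) := by
        gcongr
    _ = 9 * (1 / Real.exp (|β|/4) ^ 2) := by field_simp; norm_num

/-- Exponential decay of `∂_φ 𝒵(β,φ) = −i Z′(β + 2πi − iφ)`, i.e. of `Z′`, for `|β| ≥ 1`,
uniformly in `φ ∈ [0, 2π]`. -/
theorem Zker_deriv_exp_decay (α : ℝ) (hα : α ∈ Set.Ioo (π/2) π) :
    ∃ C > 0, ∀ φ ∈ Set.Icc (0:ℝ) (2*π), ∀ β : ℝ, 1 ≤ |β| →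
      ‖deriv (Zfun α) ((β : ℂ) + 2*(π : ℝ)*Complex.I - Complex.I * (φ : ℝ))‖ ≤
        C * Real.exp (-|β|/2) := by
  refine ⟨36, by norm_num, fun φ _ β hβ => ?_⟩
  set z : ℂ := (β : ℂ) + 2*(π : ℝ)*Complex.I - Complex.I * (φ : ℝ) with hz
  have hzre : z.re = β := by simp [hz]
  have aff : ∀ s t : ℝ, HasDerivAt (fun z : ℂ => (1/4 : ℂ) *
      (z - Complex.I * (s : ℝ) - Complex.I * (π/2 : ℝ) + Complex.I * (t : ℝ))) (1/4) z := by
    intro s t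
    simpa using (((((hasDerivAt_id z).sub_const (Complex.I * (s : ℝ))).sub_const
      (Complex.I * (π/2 : ℝ))).add_const (Complex.I * (t : ℝ))).const_mul (1/4 : ℂ))
  have term : ∀ s t : ℝ, ∃ d, HasDerivAt (fun z : ℂ => ccoth ((1/4 : ℂ) *
      (z - Complex.I * (s : ℝ) - Complex.I * (π/2 : ℝ) + Complex.I * (t : ℝ)))) d z ∧
      ‖d‖ ≤ 9 * Real.exp (-|β|/2) := by
    intro s t
    refine ccoth_comp_deriv_decay hβ (aff s t) ?_
    have hq : (1/4 : ℂ) = ((1/4 : ℝ) : ℂ) := by norm_num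
    rw [hq, Complex.re_ofReal_mul]
    simp only [Complex.add_re, Complex.sub_re, Complex.re_mul_ofReal, Complex.I_re, hzre]
    ring
  obtain ⟨a, ha, ha'⟩ := term (π/2) α
  obtain ⟨b, hb, hb'⟩ := term (π/2) (-α)
  obtain ⟨c, hc, hc'⟩ := term (5*π/2) α
  obtain ⟨d, hd, hd'⟩ := term (5*π/2) (-α)
  have hZ : HasDerivAt (Zfun α) (-(a - b) + (c - d)) z := by
    refine (((ha.sub hb).neg).add (hc.sub hd)).congr_of_eventuallyEq
      (Filter.Eventually.of_forall fun w => ?_)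
    simp only [Zfun, Ufun, Pi.add_apply, Pi.neg_apply, Pi.sub_apply, Complex.ofReal_neg, mul_neg,
      ← sub_eq_add_neg]
  rw [hZ.deriv]
  have h1 := norm_add_le (-(a - b)) (c - d)
  have h2 := norm_sub_le a b
  have h3 := norm_sub_le c d
  rw [norm_neg] at h1
  linarith
end

section
/- There exists a constant C > 0 such that for every φ ∈ [0, 2π] and every β ∈ ℝ with either β ≠ 0 or φ ∉ {φ₊, φ₋}, one has |𝒵(β, φ) + 4/(β + i(φ₊ − φ)) − 4/(β + i(φ₋ − φ))| ≤ C. In other words, after subtracting the two simple-pole terms −4/(β + iε₊) + 4/(β + iε₋), with ε_± = φ_± − φ, the remainder of the kernel 𝒵 is uniformly bounded on ℝ × [0, 2π]. -/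
/-!
With `w_± = (β + iε_±)/4`, the arguments of the four hyperbolic cotangents in `𝒵` are `w_±` and
`w_± - iπ/2`. Since `coth (w - iπ/2) = tanh w` and `coth w - tanh w = 2 / sinh (2w)`, this gives
`𝒵 = -2 / sinh (2w₊) + 2 / sinh (2w₋)` (`Zker_eq`), while the pole terms are `4 / (4w_±)`.

So it suffices to bound `1 / sinh w - 1 / w` on a closed strip `|Im w| ≤ δ` with `δ < π`
(`exists_bound_inv_sinh_sub_inv`), applied with `δ = (π + α)/2`. For `|Re w| ≥ 1` this follows from
`‖sinh w‖ ≥ |sinh (Re w)| ≥ |Re w|`. For `|Re w| ≤ 1` the difference is, off `0`, the difference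
quotient at `0` of `w / sinh w`, which is holomorphic near the compact rectangle.
The convention `x / 0 = 0` makes all of these facts hold at the poles as well.
-/

open Real MeasureTheory Set Filter

lemma ccoth_sub_pi_div_two_mul_I (w : ℂ) :
    ccoth (w - Complex.I * (π / 2 : ℝ)) = Complex.sinh w / Complex.cosh w := by
  unfold ccoth
  have hc : Complex.cosh (Complex.I * (π / 2 : ℝ)) = 0 := by
    rw [mul_comm, Complex.cosh_mul_I, ← Complex.ofReal_cos]; simp
  have hs : Complex.sinh (Complex.I * (π / 2 : ℝ)) = Complex.I := by
    rw [mul_comm, Complex.sinh_mul_I, ← Complex.ofReal_sin]; simp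
  rw [Complex.cosh_sub, Complex.sinh_sub, hc, hs]
  simp only [mul_zero, zero_sub]
  rw [neg_div_neg_eq, mul_div_mul_right _ _ Complex.I_ne_zero]

lemma ccoth_sub_tanh (w : ℂ) :
    ccoth w - Complex.sinh w / Complex.cosh w = 2 * (Complex.sinh (2 * w))⁻¹ := by
  unfold ccoth
  rw [Complex.sinh_two_mul]
  by_cases hs : Complex.sinh w = 0
  · simp [hs]
  by_cases hc : Complex.cosh w = 0
  · simp [hc]
  field_simp
  exact Complex.cosh_sq_sub_sinh_sq w

lemma Zker_eq (α β φ : ℝ) :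
    Zker α β φ =
      -(2 * (Complex.sinh (((β : ℂ) + Complex.I * ((π + α - φ : ℝ) : ℂ)) / 2))⁻¹)
      + 2 * (Complex.sinh (((β : ℂ) + Complex.I * ((π - α - φ : ℝ) : ℂ)) / 2))⁻¹ := by
  set p : ℂ := ((β : ℂ) + Complex.I * ((π + α - φ : ℝ) : ℂ)) with hp
  set m : ℂ := ((β : ℂ) + Complex.I * ((π - α - φ : ℝ) : ℂ)) with hm
  have h1 := ccoth_sub_tanh (p / 4)
  have h2 := ccoth_sub_tanh (m / 4)
  rw [← ccoth_sub_pi_div_two_mul_I] at h1 h2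
  rw [show p / 2 = 2 * (p / 4) by ring, show m / 2 = 2 * (m / 4) by ring, ← h1, ← h2]
  unfold Zker Zfun Ufun
  have e1 : (1/4 : ℂ) * ((β : ℂ) + 2*(π : ℝ)*Complex.I - Complex.I * (φ : ℝ)
      - Complex.I * (π/2 : ℝ) - Complex.I * (π/2 : ℝ) + Complex.I * (α : ℝ)) = p / 4 := by
    rw [hp]; push_cast; ring
  have e2 : (1/4 : ℂ) * ((β : ℂ) + 2*(π : ℝ)*Complex.I - Complex.I * (φ : ℝ)
      - Complex.I * (π/2 : ℝ) - Complex.I * (π/2 : ℝ) - Complex.I * (α : ℝ)) = m / 4 := by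
    rw [hm]; push_cast; ring
  have e3 : (1/4 : ℂ) * ((β : ℂ) + 2*(π : ℝ)*Complex.I - Complex.I * (φ : ℝ)
      - Complex.I * (5*π/2 : ℝ) - Complex.I * (π/2 : ℝ) + Complex.I * (α : ℝ))
      = p / 4 - Complex.I * (π / 2 : ℝ) := by
    rw [hp]; push_cast; ring
  have e4 : (1/4 : ℂ) * ((β : ℂ) + 2*(π : ℝ)*Complex.I - Complex.I * (φ : ℝ)
      - Complex.I * (5*π/2 : ℝ) - Complex.I * (π/2 : ℝ) - Complex.I * (α : ℝ))
      = m / 4 - Complex.I * (π / 2 : ℝ) := by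
    rw [hm]; push_cast; ring
  rw [e1, e2, e3, e4]
  ring

lemma re_le_norm_sinh {w : ℂ} (hw : 0 ≤ w.re) : w.re ≤ ‖Complex.sinh w‖ := by
  have h1 : Real.sinh w.re ≤ ‖Complex.sinh w‖ := by
    have h := norm_sub_norm_le (Complex.exp w) (Complex.exp (-w))
    rw [Complex.norm_exp, Complex.norm_exp, Complex.neg_re] at h
    rw [Complex.sinh, norm_div, Real.sinh_eq]
    norm_num
    linarith
  exact (Real.self_le_sinh_iff.2 hw).trans h1

lemma abs_re_le_norm_sinh (w : ℂ) : |w.re| ≤ ‖Complex.sinh w‖ := by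
  rcases le_total 0 w.re with h | h
  · rw [abs_of_nonneg h]; exact re_le_norm_sinh h
  · rw [abs_of_nonpos h]
    have := re_le_norm_sinh (w := -w) (by simpa using h)
    simpa using this

lemma eq_zero_of_sinh_eq_zero {w : ℂ} (him : |w.im| < π) (h : Complex.sinh w = 0) : w = 0 := by
  have hre : w.re = 0 := by
    have := abs_re_le_norm_sinh w
    rw [h, norm_zero] at this
    exact abs_nonpos_iff.1 this
  have hw : w = w.im * Complex.I := by
    apply Complex.ext <;> simp [hre]
  rw [hw, Complex.sinh_mul_I, ← Complex.ofReal_sin] at h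
  have hs : Real.sin w.im = 0 :=
    Complex.ofReal_eq_zero.1 ((mul_eq_zero.1 h).resolve_right Complex.I_ne_zero)
  have := (Real.sin_eq_zero_iff_of_lt_of_lt (abs_lt.1 him).1 (abs_lt.1 him).2).1 hs
  rw [hw, this]; simp

lemma exists_bound_inv_sinh_sub_inv {δ : ℝ} (hδ : δ < π) :
    ∃ C : ℝ, 0 < C ∧ ∀ w : ℂ, |w.im| ≤ δ → ‖(Complex.sinh w)⁻¹ - w⁻¹‖ ≤ C := by
  -- `g w = sinh w / w`, extended by `g 0 = 1`
  set g : ℂ → ℂ := dslope Complex.sinh 0 with hg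
  have hg0 : g 0 = 1 := by simp [hg, dslope_same]
  have hgw : ∀ w : ℂ, w ≠ 0 → g w = w⁻¹ * Complex.sinh w := by
    intro w hw
    simp [hg, dslope_of_ne _ hw, slope_def_field, div_eq_inv_mul]
  have hgd : Differentiable ℂ g := by
    rw [← differentiableOn_univ, hg, Complex.differentiableOn_dslope Filter.univ_mem]
    exact Complex.differentiable_sinh.differentiableOn
  set S : Set ℂ := {w | g w ≠ 0} with hS
  have hSo : IsOpen S := isOpen_ne_fun hgd.continuous continuous_const
  have h0S : S ∈ nhds (0 : ℂ) := hSo.mem_nhds (by simp [hS, hg0])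
  have hdq : ContinuousOn (dslope (fun w => (g w)⁻¹) 0) S := by
    refine DifferentiableOn.continuousOn (𝕜 := ℂ) ?_
    rw [Complex.differentiableOn_dslope h0S]
    exact hgd.differentiableOn.fun_inv fun w hw => hw
  have hK : IsCompact (Icc (-1 : ℝ) 1 ×ℂ Icc (-δ) δ) := isCompact_Icc.reProdIm isCompact_Icc
  have hKS : Icc (-1 : ℝ) 1 ×ℂ Icc (-δ) δ ⊆ S := by
    intro w hw
    rw [Complex.mem_reProdIm] at hw
    change g w ≠ 0
    by_cases h : w = 0
    · simp [h, hg0]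
    · rw [hgw w h]
      exact mul_ne_zero (inv_ne_zero h) fun hs =>
        h (eq_zero_of_sinh_eq_zero ((abs_le.2 hw.2).trans_lt hδ) hs)
  obtain ⟨C, hC⟩ := hK.exists_bound_of_continuousOn (hdq.mono hKS)
  refine ⟨max C 2, lt_of_lt_of_le two_pos (le_max_right _ _), fun w hw => ?_⟩
  rcases le_total |w.re| 1 with h | h
  · by_cases hw0 : w = 0
    · simp [hw0]
    have := hC w (Complex.mem_reProdIm.2 ⟨abs_le.1 h, abs_le.1 hw⟩)
    rw [dslope_of_ne _ hw0, slope_def_field, hg0, hgw w hw0] at this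
    refine le_trans (le_of_eq ?_) (this.trans (le_max_left _ _))
    congr 1
    rw [mul_inv, inv_inv, inv_one, sub_zero, sub_div, mul_div_cancel_left₀ _ hw0, one_div]
  · refine le_trans ?_ (le_max_right _ _)
    have h1 : ‖(Complex.sinh w)⁻¹‖ ≤ 1 := by
      rw [norm_inv]; exact inv_le_one_of_one_le₀ (h.trans (abs_re_le_norm_sinh w))
    have h2 : ‖w⁻¹‖ ≤ 1 := by
      rw [norm_inv]; exact inv_le_one_of_one_le₀ (h.trans (Complex.abs_re_le_norm w))
    linarith [norm_sub_le (Complex.sinh w)⁻¹ w⁻¹]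

/-- After subtracting the two simple-pole terms `−4/(β + iε₊) + 4/(β + iε₋)`, with
`ε_± = φ_± − φ`, `φ₊ = π + α`, `φ₋ = π − α`, the remainder of the kernel `𝒵` is uniformly
bounded on `ℝ × [0, 2π]`. -/
theorem Zker_pole_decomposition (α : ℝ) (hα : α ∈ Set.Ioo (π/2) π) :
    ∃ C > 0, ∀ φ ∈ Set.Icc (0:ℝ) (2*π), ∀ β : ℝ,
      (β ≠ 0 ∨ (φ ≠ π + α ∧ φ ≠ π - α)) →
      ‖Zker α β φ + 4 / ((β : ℂ) + Complex.I * ((π + α - φ : ℝ) : ℂ))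
          - 4 / ((β : ℂ) + Complex.I * ((π - α - φ : ℝ) : ℂ))‖ ≤ C := by
  obtain ⟨hα1, hα2⟩ := hα
  obtain ⟨C, hC0, hC⟩ := exists_bound_inv_sinh_sub_inv (δ := (π + α) / 2) (by linarith)
  refine ⟨4 * C, by positivity, fun φ hφ β _ => ?_⟩
  obtain ⟨hφ1, hφ2⟩ := hφ
  have hπ := Real.pi_pos
  rw [Zker_eq]
  have im_eq : ∀ e : ℝ, (((β : ℂ) + Complex.I * (e : ℂ)) / 2).im = e / 2 := by
    intro e
    simp [Complex.div_ofNat_im]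
  have hp := hC (((β : ℂ) + Complex.I * ((π + α - φ : ℝ) : ℂ)) / 2) (by
    rw [im_eq, abs_le]; constructor <;> linarith)
  have hm := hC (((β : ℂ) + Complex.I * ((π - α - φ : ℝ) : ℂ)) / 2) (by
    rw [im_eq, abs_le]; constructor <;> linarith)
  generalize ((β : ℂ) + Complex.I * ((π + α - φ : ℝ) : ℂ)) = p at hp ⊢
  generalize ((β : ℂ) + Complex.I * ((π - α - φ : ℝ) : ℂ)) = m at hm ⊢
  have key : -(2 * (Complex.sinh (p / 2))⁻¹) + 2 * (Complex.sinh (m / 2))⁻¹ + 4 / p - 4 / m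
      = 2 * (((Complex.sinh (m / 2))⁻¹ - (m / 2)⁻¹) - ((Complex.sinh (p / 2))⁻¹ - (p / 2)⁻¹)) := by
    rw [inv_div, inv_div]; ring
  rw [key, norm_mul, Complex.norm_ofNat]
  linarith [norm_sub_le ((Complex.sinh (m / 2))⁻¹ - (m / 2)⁻¹)
    ((Complex.sinh (p / 2))⁻¹ - (p / 2)⁻¹)]
end

section
/- There exists a constant C > 0 such that for every φ ∈ [0, 2π] and every β ∈ ℝ with either β ≠ 0 or φ ∉ {φ₊, φ₋}, one has |−i Z′(β + 2πi − iφ) + 4i/(β + i(φ₊ − φ))² − 4i/(β + i(φ₋ − φ))²| ≤ C, where Z′ is the complex derivative of Z. That is, ∂_φ 𝒵(β, φ) minus its two double-pole terms −4i/(β + iε₊)² + 4i/(β + iε₋)², with ε_± = φ_± − φ, is uniformly bounded on ℝ × [0, 2π]. -/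
/-!
With `w = β + i(φ_± - φ)`, two of the four summands of `Z` are `∓coth (w / 4)`, whose derivatives
`±1 / (4 sinh² (w / 4))` carry the double poles `±4 / w²`. The other two are
`coth` at points whose imaginary parts stay in a compact subset of `(-π, 0)`.

Everything rests on `|sinh (x + iy)|² = sinh² x + sin² y`. It bounds `1 / sinh²` on the pole-free
strips (`exists_norm_inv_sinh_sq_le`), and, with Jordan's inequality, gives
`|sinh u| ≥ (2 / π) |u|` for `|Im u| ≤ π / 2`. The latter together with
`sinh u - u = O(u³)` near `0` bounds `1 / sinh² u - 1 / u²` (`norm_inv_sinh_sq_sub_le`).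
-/

open Real MeasureTheory Set Filter

lemma norm_sinh_sq (u : ℂ) :
    ‖Complex.sinh u‖ ^ 2 = Real.sinh u.re ^ 2 + Real.sin u.im ^ 2 := by
  have h : Complex.sinh u = ((Real.sinh u.re * Real.cos u.im : ℝ) : ℂ)
      + ((Real.cosh u.re * Real.sin u.im : ℝ) : ℂ) * Complex.I := by
    conv_lhs => rw [← Complex.re_add_im u]
    rw [Complex.sinh_add, Complex.sinh_mul_I, Complex.cosh_mul_I]
    push_cast
    ring
  rw [h, ← Complex.normSq_eq_norm_sq, Complex.normSq_add_mul_I]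
  have h1 := Real.cosh_sq u.re
  have h2 := Real.sin_sq_add_cos_sq u.im
  rw [mul_pow, mul_pow, h1]
  linear_combination (Real.sinh u.re ^ 2) * h2

lemma norm_le_norm_sinh {u : ℂ} (hu : |u.im| ≤ π / 2) :
    2 / π * ‖u‖ ≤ ‖Complex.sinh u‖ := by
  have hpi := Real.pi_gt_three
  apply le_of_sq_le_sq _ (norm_nonneg _)
  rw [norm_sinh_sq, mul_pow, ← Complex.normSq_eq_norm_sq, Complex.normSq_apply]
  have h1 : 2 / π * |u.im| ≤ |Real.sin u.im| := Real.mul_abs_le_abs_sin hu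
  have h2 : |u.re| ≤ |Real.sinh u.re| := by
    rw [Real.abs_sinh]
    exact Real.self_le_sinh_iff.2 (abs_nonneg _)
  have h3 : (2 / π) ^ 2 ≤ 1 := by
    have : 2 / π ≤ 1 := by rw [div_le_one (by linarith)]; linarith
    exact pow_le_one₀ (by positivity) this
  have h4 : (2 / π) ^ 2 * u.im ^ 2 ≤ Real.sin u.im ^ 2 := by
    have := pow_le_pow_left₀ (by positivity) h1 2
    rwa [mul_pow, sq_abs, sq_abs] at this
  have h5 : u.re ^ 2 ≤ Real.sinh u.re ^ 2 := sq_le_sq.2 h2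
  have h6 : (2 / π) ^ 2 * u.re ^ 2 ≤ u.re ^ 2 := mul_le_of_le_one_left (sq_nonneg _) h3
  nlinarith

lemma norm_sinh_sub_self_le {u : ℂ} (hu : ‖u‖ ≤ 1) :
    ‖Complex.sinh u - u‖ ≤ 2 / 9 * ‖u‖ ^ 3 := by
  have h1 := Complex.exp_bound hu (n := 3) (by norm_num)
  have h2 := Complex.exp_bound (x := -u) (by simpa using hu) (n := 3) (by norm_num)
  simp only [Finset.sum_range_succ, Finset.sum_range_zero, norm_neg] at h1 h2
  norm_num [Nat.factorial] at h1 h2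
  have h : Complex.sinh u - u = ((Complex.exp u - (1 + u + u ^ 2 / 2))
      - (Complex.exp (-u) - (1 + -u + u ^ 2 / 2))) / 2 := by
    rw [Complex.sinh]; ring
  rw [h, norm_div]
  have := norm_sub_le (Complex.exp u - (1 + u + u ^ 2 / 2))
    (Complex.exp (-u) - (1 + -u + u ^ 2 / 2))
  norm_num at this ⊢
  linarith

/-- On the strip `|Im u| ≤ π / 2` the only singularity of `1 / sinh²` is the double pole at `0`,
and subtracting it leaves a bounded function. -/
lemma norm_inv_sinh_sq_sub_le {u : ℂ} (hu : |u.im| ≤ π / 2) (h0 : u ≠ 0) :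
    ‖1 / Complex.sinh u ^ 2 - 1 / u ^ 2‖ ≤ π ^ 2 / 4 + 1 := by
  have hpi := Real.pi_pos
  have hn : 0 < ‖u‖ := norm_pos_iff.2 h0
  have hs := norm_le_norm_sinh hu
  have hs0 : 0 < ‖Complex.sinh u‖ := lt_of_lt_of_le (by positivity) hs
  have hs' : Complex.sinh u ≠ 0 := norm_pos_iff.1 hs0
  have hu' : ‖u‖ ^ 2 ≤ π ^ 2 / 4 * ‖Complex.sinh u‖ ^ 2 := by
    have h := pow_le_pow_left₀ (by positivity) hs 2
    calc ‖u‖ ^ 2 = π ^ 2 / 4 * (2 / π * ‖u‖) ^ 2 := by field_simp; norm_num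
      _ ≤ _ := by gcongr
  rcases le_total ‖u‖ 1 with h1 | h1
  · have hd := norm_sinh_sub_self_le h1
    have ha : ‖u + Complex.sinh u‖ ≤ 20 / 9 * ‖u‖ := by
      have h : u + Complex.sinh u = (Complex.sinh u - u) + 2 * u := by ring
      rw [h]
      refine (norm_add_le _ _).trans ?_
      have : ‖u‖ ^ 3 ≤ ‖u‖ := pow_le_of_le_one hn.le h1 (by norm_num)
      rw [norm_mul]
      norm_num
      linarith
    have h : 1 / Complex.sinh u ^ 2 - 1 / u ^ 2
        = -((Complex.sinh u - u) * (u + Complex.sinh u)) / (Complex.sinh u ^ 2 * u ^ 2) := by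
      field_simp
      ring
    rw [h, norm_div, norm_neg, norm_mul, norm_mul, norm_pow, norm_pow, div_le_iff₀ (by positivity)]
    calc ‖Complex.sinh u - u‖ * ‖u + Complex.sinh u‖
        ≤ (2 / 9 * ‖u‖ ^ 3) * (20 / 9 * ‖u‖) := by gcongr
      _ = 40 / 81 * (‖u‖ ^ 2 * ‖u‖ ^ 2) := by ring
      _ ≤ 1 * (‖u‖ ^ 2 * ‖u‖ ^ 2) := by gcongr; norm_num
      _ ≤ 1 * (π ^ 2 / 4 * ‖Complex.sinh u‖ ^ 2 * ‖u‖ ^ 2) := by gcongr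
      _ ≤ (π ^ 2 / 4 + 1) * (‖Complex.sinh u‖ ^ 2 * ‖u‖ ^ 2) := by
        have : 0 ≤ ‖Complex.sinh u‖ ^ 2 * ‖u‖ ^ 2 := by positivity
        linarith
  · refine (norm_sub_le _ _).trans (add_le_add ?_ ?_)
    · rw [norm_div, norm_one, norm_pow, div_le_iff₀ (by positivity)]
      exact (one_le_pow₀ h1).trans hu'
    · rw [norm_div, norm_one, norm_pow, div_le_one (by positivity)]
      exact one_le_pow₀ h1

/-- `1 / sinh²` is bounded on any closed strip lying strictly between the lines `Im u = -π` and
`Im u = 0`. -/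
lemma exists_norm_inv_sinh_sq_le {a b : ℝ} (ha : -π < a) (hb : b < 0) :
    ∃ M : ℝ, ∀ u : ℂ, u.im ∈ Set.Icc a b →
      Complex.sinh u ≠ 0 ∧ ‖1 / Complex.sinh u ^ 2‖ ≤ M := by
  have hsin : ∀ y ∈ Set.Icc a b, Real.sin y ^ 2 ≠ 0 := fun y hy =>
    pow_ne_zero _ (Real.sin_neg_of_neg_of_neg_pi_lt (by linarith [hy.2]) (by linarith [hy.1])).ne
  have hc : ContinuousOn (fun y : ℝ => (Real.sin y ^ 2)⁻¹) (Set.Icc a b) :=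
    ContinuousOn.inv₀ (by fun_prop) hsin
  obtain ⟨M, hM⟩ := isCompact_Icc.bddAbove_image hc
  refine ⟨M, fun u hu => ?_⟩
  have hpos : 0 < Real.sin u.im ^ 2 := lt_of_le_of_ne (sq_nonneg _) (hsin _ hu).symm
  have hle : Real.sin u.im ^ 2 ≤ ‖Complex.sinh u‖ ^ 2 := by
    rw [norm_sinh_sq]; linarith [sq_nonneg (Real.sinh u.re)]
  refine ⟨fun h => ?_, ?_⟩
  · rw [h] at hle
    norm_num at hle
    simp [hle] at hpos
  · rw [norm_div, norm_one, norm_pow, one_div]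
    exact (inv_anti₀ hpos hle).trans (hM ⟨_, hu, rfl⟩)

lemma hasDerivAt_ccoth_affine {c z : ℂ} (h : Complex.sinh ((1 / 4 : ℂ) * (z + c)) ≠ 0) :
    HasDerivAt (fun z => ccoth ((1 / 4 : ℂ) * (z + c)))
      (-(1 / 4) * (1 / Complex.sinh ((1 / 4 : ℂ) * (z + c)) ^ 2)) z := by
  have hl : HasDerivAt (fun z : ℂ => (1 / 4 : ℂ) * (z + c)) (1 / 4) z := by
    simpa using ((hasDerivAt_id z).add_const c).const_mul (1 / 4 : ℂ)
  have h1 := (hl.ccosh).div (hl.csinh) h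
  refine h1.congr_deriv ?_
  have := Complex.cosh_sq ((1 / 4 : ℂ) * (z + c))
  generalize (1 / 4 : ℂ) * (z + c) = v at *
  field_simp
  linear_combination -this

/-- The derivative `∂_φ 𝒵(β,φ) = −i Z′(β + 2πi − iφ)` minus its two double-pole terms
`−4i/(β + iε₊)² + 4i/(β + iε₋)²`, with `ε_± = φ_± − φ`, `φ₊ = π + α`, `φ₋ = π − α`, is
uniformly bounded on `ℝ × [0, 2π]`. -/
theorem Zker_deriv_pole_decomposition (α : ℝ) (hα : α ∈ Set.Ioo (π/2) π) :
    ∃ C > 0, ∀ φ ∈ Set.Icc (0:ℝ) (2*π), ∀ β : ℝ,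
      (β ≠ 0 ∨ (φ ≠ π + α ∧ φ ≠ π - α)) →
      ‖-Complex.I * deriv (Zfun α) ((β : ℂ) + 2*(π : ℝ)*Complex.I - Complex.I * (φ : ℝ))
          + 4*Complex.I / ((β : ℂ) + Complex.I * ((π + α - φ : ℝ) : ℂ))^2
          - 4*Complex.I / ((β : ℂ) + Complex.I * ((π - α - φ : ℝ) : ℂ))^2‖ ≤ C := by
  obtain ⟨hα1, hα2⟩ := hα
  have hpi := Real.pi_pos
  obtain ⟨M₃, hM₃⟩ := exists_norm_inv_sinh_sq_le (a := (α - 3 * π) / 4) (b := (α - π) / 4)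
    (by linarith) (by linarith)
  obtain ⟨M₄, hM₄⟩ := exists_norm_inv_sinh_sq_le (a := (-α - 3 * π) / 4) (b := (-α - π) / 4)
    (by linarith) (by linarith)
  refine ⟨(π ^ 2 / 4 + 1) + (π ^ 2 / 4 + 1) + |M₃| + |M₄|, by positivity, ?_⟩
  rintro φ ⟨hφ0, hφ2⟩ β hβ
  set z : ℂ := (β : ℂ) + 2*(π : ℝ)*Complex.I - Complex.I * (φ : ℝ) with hz
  -- The four `coth` arguments, in the order in which they occur in `Z`.
  set u₁ : ℂ := (1 / 4 : ℂ) * (z + ((α - π : ℝ) : ℂ) * Complex.I) with hu₁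
  set u₂ : ℂ := (1 / 4 : ℂ) * (z + ((-α - π : ℝ) : ℂ) * Complex.I) with hu₂
  set u₃ : ℂ := (1 / 4 : ℂ) * (z + ((α - 3 * π : ℝ) : ℂ) * Complex.I) with hu₃
  set u₄ : ℂ := (1 / 4 : ℂ) * (z + ((-α - 3 * π : ℝ) : ℂ) * Complex.I) with hu₄
  have hw₁ : (β : ℂ) + Complex.I * ((π + α - φ : ℝ) : ℂ) = 4 * u₁ := by
    rw [hu₁, hz]; push_cast; ring
  have hw₂ : (β : ℂ) + Complex.I * ((π - α - φ : ℝ) : ℂ) = 4 * u₂ := by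
    rw [hu₂, hz]; push_cast; ring
  have hw₃ : u₃ = ((β / 4 : ℝ) : ℂ) + (((α - π - φ) / 4 : ℝ) : ℂ) * Complex.I := by
    rw [hu₃, hz]; push_cast; ring
  have hw₄ : u₄ = ((β / 4 : ℝ) : ℂ) + (((-α - π - φ) / 4 : ℝ) : ℂ) * Complex.I := by
    rw [hu₄, hz]; push_cast; ring
  have he₁ : u₁ = ((β / 4 : ℝ) : ℂ) + (((π + α - φ) / 4 : ℝ) : ℂ) * Complex.I := by
    rw [hu₁, hz]; push_cast; ring
  have he₂ : u₂ = ((β / 4 : ℝ) : ℂ) + (((π - α - φ) / 4 : ℝ) : ℂ) * Complex.I := by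
    rw [hu₂, hz]; push_cast; ring
  have hi (x y : ℝ) : ((x : ℂ) + (y : ℂ) * Complex.I).im = y := by simp
  have hr (x y : ℝ) : ((x : ℂ) + (y : ℂ) * Complex.I).re = x := by simp
  obtain ⟨hs₃, hb₃⟩ := hM₃ u₃ (by rw [hw₃, hi]; constructor <;> linarith)
  obtain ⟨hs₄, hb₄⟩ := hM₄ u₄ (by rw [hw₄, hi]; constructor <;> linarith)
  have hne₁ : u₁ ≠ 0 := by
    intro h
    have h1 := congrArg Complex.re h
    have h2 := congrArg Complex.im h
    rw [he₁, hr, Complex.zero_re] at h1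
    rw [he₁, hi, Complex.zero_im] at h2
    rcases hβ with h | h
    · exact h (by linarith)
    · exact h.1 (by linarith)
  have hne₂ : u₂ ≠ 0 := by
    intro h
    have h1 := congrArg Complex.re h
    have h2 := congrArg Complex.im h
    rw [he₂, hr, Complex.zero_re] at h1
    rw [he₂, hi, Complex.zero_im] at h2
    rcases hβ with h | h
    · exact h (by linarith)
    · exact h.2 (by linarith)
  have him₁ : |u₁.im| ≤ π / 2 := by
    rw [he₁, hi, abs_le]; constructor <;> linarith
  have him₂ : |u₂.im| ≤ π / 2 := by
    rw [he₂, hi, abs_le]; constructor <;> linarith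
  have hs₁ : Complex.sinh u₁ ≠ 0 := norm_pos_iff.1 <|
    lt_of_lt_of_le (mul_pos (by positivity) (norm_pos_iff.2 hne₁)) (norm_le_norm_sinh him₁)
  have hs₂ : Complex.sinh u₂ ≠ 0 := norm_pos_iff.1 <|
    lt_of_lt_of_le (mul_pos (by positivity) (norm_pos_iff.2 hne₂)) (norm_le_norm_sinh him₂)
  have hb₁ := norm_inv_sinh_sq_sub_le him₁ hne₁
  have hb₂ := norm_inv_sinh_sq_sub_le him₂ hne₂
  have hZ : Zfun α = fun z =>
      -(ccoth ((1 / 4 : ℂ) * (z + ((α - π : ℝ) : ℂ) * Complex.I))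
        - ccoth ((1 / 4 : ℂ) * (z + ((-α - π : ℝ) : ℂ) * Complex.I)))
      + (ccoth ((1 / 4 : ℂ) * (z + ((α - 3 * π : ℝ) : ℂ) * Complex.I))
        - ccoth ((1 / 4 : ℂ) * (z + ((-α - 3 * π : ℝ) : ℂ) * Complex.I))) := by
    funext z
    simp only [Zfun, Ufun]
    congr 3 <;> congr 1 <;> push_cast <;> ring
  have hD := (((hasDerivAt_ccoth_affine hs₁).sub (hasDerivAt_ccoth_affine hs₂)).neg.add
    ((hasDerivAt_ccoth_affine hs₃).sub (hasDerivAt_ccoth_affine hs₄)))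
  rw [(congrArg (fun f => deriv f z) hZ).trans hD.deriv, hw₁, hw₂, ← hu₁, ← hu₂, ← hu₃, ← hu₄]
  have key : -Complex.I * (-(-(1 / 4) * (1 / Complex.sinh u₁ ^ 2)
        - -(1 / 4) * (1 / Complex.sinh u₂ ^ 2))
        + (-(1 / 4) * (1 / Complex.sinh u₃ ^ 2) - -(1 / 4) * (1 / Complex.sinh u₄ ^ 2)))
        + 4 * Complex.I / (4 * u₁) ^ 2 - 4 * Complex.I / (4 * u₂) ^ 2
      = Complex.I / 4 * (-(1 / Complex.sinh u₁ ^ 2 - 1 / u₁ ^ 2)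
        + (1 / Complex.sinh u₂ ^ 2 - 1 / u₂ ^ 2)
        + 1 / Complex.sinh u₃ ^ 2 - 1 / Complex.sinh u₄ ^ 2) := by
    field_simp
    ring
  rw [key, norm_mul]
  have hI : ‖Complex.I / 4‖ ≤ 1 := by rw [norm_div, Complex.norm_I]; norm_num
  refine (mul_le_of_le_one_left (norm_nonneg _) hI).trans ?_
  refine (norm_sub_le _ _).trans (add_le_add ?_ (hb₄.trans (le_abs_self _)))
  refine (norm_add_le _ _).trans (add_le_add ?_ (hb₃.trans (le_abs_self _)))
  refine (norm_add_le _ _).trans (add_le_add ?_ hb₂)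
  rwa [norm_neg]
end

section
/- For every ω ∈ ℂ with Im ω > 0 there exist constants C > 0 and c > 0, depending only on ω, such that for every ρ > 0 and every real ε ≠ 0 one has |∫_{−1}^{1} e^{iωρ cosh β} / (β + iε) dβ| ≤ C e^{−cρ}; the bound is uniform in ε. -/
open Real MeasureTheory Set Filter

/-!
The numerator `e^{iωρ cosh β}` is even in `β`, so on the symmetric interval `[-1, 1]` only the even
part of the Cauchy kernel contributes:
`1/(β + iε) + 1/(-β + iε) = -2iε/(β² + ε²)`, a multiple of the Poisson kernel, whose integral is at
most `π` uniformly in `ε` (`integral_poisson_le`). Since `cosh β ≥ 1`, the numerator has norm at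
most `e^{-ρ Im ω}`, and the bound holds with `C = π` and `c = Im ω`.
-/

lemma continuous_poisson (a : ℝ) (ha : 0 < a) :
    Continuous fun β : ℝ => a / (β ^ 2 + a ^ 2) :=
  continuous_const.div (by fun_prop) fun β => by positivity

lemma integral_poisson_le (a : ℝ) (ha : 0 < a) :
    ∫ β in (-1:ℝ)..1, a / (β ^ 2 + a ^ 2) ≤ π := by
  have hderiv : ∀ β ∈ Set.uIcc (-1:ℝ) 1,
      HasDerivAt (fun x : ℝ => Real.arctan (x / a)) (a / (β ^ 2 + a ^ 2)) β := by
    intro β _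
    have h := ((hasDerivAt_id' β).div_const a).arctan
    convert h using 1
    field_simp
    ring
  rw [intervalIntegral.integral_eq_sub_of_hasDerivAt hderiv
    ((continuous_poisson a ha).intervalIntegrable _ _)]
  linarith [Real.arctan_lt_pi_div_two (1 / a), Real.neg_pi_div_two_lt_arctan (-1 / a)]

lemma norm_exp_cosh_le (ω : ℂ) (hω : 0 < ω.im) (ρ : ℝ) (hρ : 0 < ρ) (β : ℝ) :
    ‖Complex.exp (Complex.I * ω * (ρ : ℂ) * (Real.cosh β : ℂ))‖ ≤ Real.exp (-ω.im * ρ) := by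
  rw [Complex.norm_exp, Complex.re_mul_ofReal, Complex.re_mul_ofReal, Complex.I_mul_re]
  apply Real.exp_le_exp.mpr
  nlinarith [mul_le_mul_of_nonneg_left (Real.one_le_cosh β) (mul_pos hω hρ).le]

lemma real_add_I_mul_ne_zero (ε : ℝ) (hε : ε ≠ 0) (β : ℝ) :
    (β : ℂ) + Complex.I * (ε : ℂ) ≠ 0 := by
  intro h
  have := congrArg Complex.im h
  simp at this
  exact hε this

lemma norm_cauchy_kernel_add_neg (ε : ℝ) (hε : ε ≠ 0) (β : ℝ) :
    ‖1 / ((β : ℂ) + Complex.I * (ε : ℂ)) + 1 / (((-β : ℝ) : ℂ) + Complex.I * (ε : ℂ))‖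
      = 2 * (|ε| / (β ^ 2 + |ε| ^ 2)) := by
  have h1 := real_add_I_mul_ne_zero ε hε β
  have h2 := real_add_I_mul_ne_zero ε hε (-β)
  have hpos : 0 < β ^ 2 + ε ^ 2 := by positivity
  have h3 : ((β ^ 2 + ε ^ 2 : ℝ) : ℂ) ≠ 0 := by exact_mod_cast hpos.ne'
  have hsum : 1 / ((β : ℂ) + Complex.I * (ε : ℂ)) + 1 / (((-β : ℝ) : ℂ) + Complex.I * (ε : ℂ))
      = -Complex.I * ((2 * (ε / (β ^ 2 + ε ^ 2)) : ℝ) : ℂ) := by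
    rw [div_add_div _ _ h1 h2, div_eq_iff (mul_ne_zero h1 h2)]
    push_cast at h3 ⊢
    field_simp
    linear_combination (2 * Complex.I * (ε : ℂ) ^ 3) * Complex.I_sq
  rw [hsum, norm_mul, norm_neg, Complex.norm_I, one_mul, Complex.norm_real, Real.norm_eq_abs,
    abs_mul, abs_div, abs_of_pos hpos, sq_abs, abs_two]

/-- Uniform (in `ε ≠ 0`) exponentially decaying bound for the Cauchy-type integral
`∫_{−1}^{1} e^{iωρ cosh β}/(β + iε) dβ`, for `Im ω > 0`. -/
theorem cauchy_integral_simple_pole_bound (ω : ℂ) (hω : 0 < ω.im) :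
    ∃ C > 0, ∃ c > 0, ∀ ρ : ℝ, 0 < ρ → ∀ ε : ℝ, ε ≠ 0 →
      ‖∫ β in (-1:ℝ)..1,
          Complex.exp (Complex.I * ω * (ρ : ℂ) * (Real.cosh β : ℂ)) / ((β : ℂ) + Complex.I * (ε : ℂ))‖
        ≤ C * Real.exp (-c * ρ) := by
  refine ⟨π, Real.pi_pos, ω.im, hω, fun ρ hρ ε hε => ?_⟩
  set F : ℝ → ℂ := fun β =>
    Complex.exp (Complex.I * ω * (ρ : ℂ) * (Real.cosh β : ℂ)) / ((β : ℂ) + Complex.I * (ε : ℂ))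
    with hF
  have hcont : Continuous F := by
    refine Continuous.div ?_ (by fun_prop) (real_add_I_mul_ne_zero ε hε)
    have := Real.continuous_cosh
    fun_prop
  have hcont' : Continuous fun β => F (-β) := hcont.comp continuous_neg
  have hsymm : ∫ β in (-1:ℝ)..1, F (-β) = ∫ β in (-1:ℝ)..1, F β := by
    rw [intervalIntegral.integral_comp_neg, neg_neg]
  have hdouble : ∫ β in (-1:ℝ)..1, (F β + F (-β)) = 2 * ∫ β in (-1:ℝ)..1, F β := by
    rw [intervalIntegral.integral_add (hcont.intervalIntegrable _ _)
      (hcont'.intervalIntegrable _ _), hsymm, two_mul]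
  have hpt : ∀ β : ℝ, ‖F β + F (-β)‖ ≤
      2 * Real.exp (-ω.im * ρ) * (|ε| / (β ^ 2 + |ε| ^ 2)) := by
    intro β
    have hfac : F β + F (-β) = Complex.exp (Complex.I * ω * (ρ : ℂ) * (Real.cosh β : ℂ)) *
        (1 / ((β : ℂ) + Complex.I * (ε : ℂ)) + 1 / (((-β : ℝ) : ℂ) + Complex.I * (ε : ℂ))) := by
      simp only [hF, Real.cosh_neg]
      ring
    rw [hfac, norm_mul, norm_cauchy_kernel_add_neg ε hε β]
    calc _ ≤ Real.exp (-ω.im * ρ) * (2 * (|ε| / (β ^ 2 + |ε| ^ 2))) :=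
          mul_le_mul_of_nonneg_right (norm_exp_cosh_le ω hω ρ hρ β) (by positivity)
      _ = _ := by ring
  have hbound := intervalIntegral.norm_integral_le_of_norm_le (μ := volume)
    (show (-1:ℝ) ≤ 1 by norm_num) (Eventually.of_forall fun β _ => hpt β)
    (((continuous_poisson |ε| (abs_pos.mpr hε)).const_mul _).intervalIntegrable _ _)
  rw [hdouble, norm_mul, Complex.norm_ofNat, intervalIntegral.integral_const_mul] at hbound
  have hP := mul_le_mul_of_nonneg_left (integral_poisson_le |ε| (abs_pos.mpr hε))
    (Real.exp_pos (-ω.im * ρ)).le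
  linarith
end

section
/- For every ω ∈ ℂ with Im ω > 0 there exist constants C > 0 and c > 0, depending only on ω, such that for every ρ > 0 and every real ε ≠ 0 one has |∫_{−1}^{1} e^{iωρ cosh β} / (β + iε)² dβ| ≤ C e^{−cρ}; the bound is uniform in ε, even though the pointwise bound |β + iε|^{−2} blows up non-integrably as ε → 0. -/
open Real MeasureTheory Set Filter

/-!
Write `f β = exp (iωρ cosh β)` and split `f = f 0 + (f - f 0)`. Since `cosh` has a critical point
at `0`, the difference satisfies `‖f β - f 0‖ ≤ ‖ω‖ ρ exp (-ω₂ ρ) β²` on `[-1, 1]`, and `β²` is at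
most `‖β + iε‖²`, so the difference contributes at most `2 ‖ω‖ ρ exp (-ω₂ ρ)`. The constant part is
integrated exactly through the primitive `-1 / (β + iε)`, whose values at `±1` have norm at most
`1`; this contributes at most `2 exp (-ω₂ ρ)`. Half of the exponential decay absorbs the factor
`ρ`, which gives `c = ω₂ / 2` and `C = 4 ‖ω‖ / ω₂ + 2`.
-/

/-- On the closed left half-plane `exp` is `1`-Lipschitz; here compared with its value at `0`. -/
lemma norm_exp_sub_one_le_of_re_nonpos (z : ℂ) (hz : z.re ≤ 0) : ‖Complex.exp z - 1‖ ≤ ‖z‖ := by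
  have h := (convex_halfSpace_re_le 0).norm_image_sub_le_of_norm_deriv_le
    (f := Complex.exp) (C := 1) (x := 0) (y := z)
    (fun x _ => Complex.differentiableAt_exp)
    (fun x hx => by
      rw [Complex.deriv_exp, Complex.norm_exp]
      exact Real.exp_le_one_iff.2 hx)
    (by simp) hz
  simpa using h

lemma cosh_sub_one_le_sq (x : ℝ) (hx : x ^ 2 ≤ 1) : Real.cosh x - 1 ≤ x ^ 2 := by
  have h1 := Real.cosh_le_exp_half_sq x
  have h2 := Real.exp_bound_div_one_sub_of_interval (x := x ^ 2 / 2) (by positivity) (by linarith)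
  have h3 : 1 / (1 - x ^ 2 / 2) ≤ 1 + x ^ 2 := by
    rw [div_le_iff₀ (by linarith)]
    nlinarith [sq_nonneg x]
  linarith

lemma add_I_mul_ne_zero (β ε : ℝ) (hε : ε ≠ 0) : (β : ℂ) + Complex.I * (ε : ℂ) ≠ 0 := by
  intro h
  apply hε
  simpa using congrArg Complex.im h

lemma abs_le_norm_add_I_mul (β ε : ℝ) : |β| ≤ ‖(β : ℂ) + Complex.I * (ε : ℂ)‖ := by
  simpa using Complex.abs_re_le_norm ((β : ℂ) + Complex.I * (ε : ℂ))

lemma continuous_inv_sq_add_I_mul (ε : ℝ) (hε : ε ≠ 0) :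
    Continuous fun β : ℝ => 1 / ((β : ℂ) + Complex.I * (ε : ℂ)) ^ 2 :=
  Continuous.div (by fun_prop) (by fun_prop) fun β => pow_ne_zero 2 (add_I_mul_ne_zero β ε hε)

/-- The pure double pole integrates to a quantity bounded uniformly in `ε`. -/
lemma norm_integral_double_pole_le (ε : ℝ) (hε : ε ≠ 0) :
    ‖∫ β in (-1:ℝ)..1, 1 / ((β : ℂ) + Complex.I * (ε : ℂ)) ^ 2‖ ≤ 2 := by
  have hd : ∀ β ∈ uIcc (-1:ℝ) 1,
      HasDerivAt (fun β : ℝ => -((β : ℂ) + Complex.I * (ε : ℂ))⁻¹)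
        (1 / ((β : ℂ) + Complex.I * (ε : ℂ)) ^ 2) β := by
    intro β _
    have h0 : HasDerivAt (fun β : ℝ => (β : ℂ) + Complex.I * (ε : ℂ)) 1 β :=
      (Complex.ofRealCLM.hasDerivAt (x := β)).add_const _
    have h : HasDerivAt (fun β : ℝ => -((β : ℂ) + Complex.I * (ε : ℂ))⁻¹)
        (-(-1 / ((β : ℂ) + Complex.I * (ε : ℂ)) ^ 2)) β :=
      (h0.inv (add_I_mul_ne_zero β ε hε)).neg
    rwa [neg_div, neg_neg] at h
  rw [intervalIntegral.integral_eq_sub_of_hasDerivAt hd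
    ((continuous_inv_sq_add_I_mul ε hε).intervalIntegrable _ _)]
  have hb : ∀ β : ℝ, |β| = 1 → ‖-((β : ℂ) + Complex.I * (ε : ℂ))⁻¹‖ ≤ 1 := by
    intro β h
    rw [norm_neg, norm_inv]
    exact inv_le_one_of_one_le₀ (h ▸ abs_le_norm_add_I_mul β ε)
  refine (norm_sub_le _ _).trans ?_
  have h1 := hb 1 (by simp)
  have h2 := hb (-1) (by simp)
  linarith

/-- The phase is stationary at `0`, so the exponential differs from its value there by `O(β²)`. -/
lemma norm_exp_cosh_sub_le (ω : ℂ) (hω : 0 < ω.im) (ρ : ℝ) (hρ : 0 < ρ) (β : ℝ) (hβ : β ^ 2 ≤ 1) :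
    ‖Complex.exp (Complex.I * ω * (ρ : ℂ) * (Real.cosh β : ℂ)) - Complex.exp (Complex.I * ω * ρ)‖
      ≤ ‖ω‖ * ρ * Real.exp (-ω.im * ρ) * β ^ 2 := by
  have hc : 0 ≤ Real.cosh β - 1 := by linarith [Real.one_le_cosh β]
  have he : Complex.exp (Complex.I * ω * (ρ : ℂ) * (Real.cosh β : ℂ))
        - Complex.exp (Complex.I * ω * ρ)
      = Complex.exp (Complex.I * ω * ρ)
        * (Complex.exp (Complex.I * ω * ((ρ * (Real.cosh β - 1) : ℝ) : ℂ)) - 1) := by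
    rw [mul_sub, ← Complex.exp_add, mul_one]
    congr 2
    push_cast
    ring
  have hre : (Complex.I * ω * ((ρ * (Real.cosh β - 1) : ℝ) : ℂ)).re ≤ 0 := by
    rw [Complex.re_mul_ofReal]
    simp only [Complex.I_mul_re]
    nlinarith [mul_nonneg hω.le (mul_nonneg hρ.le hc)]
  have h1 := norm_exp_sub_one_le_of_re_nonpos _ hre
  have h2 : ‖Complex.I * ω * ((ρ * (Real.cosh β - 1) : ℝ) : ℂ)‖ ≤ ‖ω‖ * (ρ * β ^ 2) := by
    rw [norm_mul, norm_mul, Complex.norm_I, one_mul, Complex.norm_real, Real.norm_eq_abs,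
      abs_of_nonneg (mul_nonneg hρ.le hc)]
    gcongr
    exact cosh_sub_one_le_sq β hβ
  have h3 : ‖Complex.exp (Complex.I * ω * ρ)‖ = Real.exp (-ω.im * ρ) := by
    rw [Complex.norm_exp, Complex.re_mul_ofReal, Complex.I_mul_re]
  rw [he, norm_mul, h3]
  calc _ ≤ Real.exp (-ω.im * ρ) * (‖ω‖ * (ρ * β ^ 2)) := by gcongr; exact h1.trans h2
    _ = _ := by ring

/-- Uniform (in `ε ≠ 0`) exponentially decaying bound for the double-pole Cauchy-type integral
`∫_{−1}^{1} e^{iωρ cosh β}/(β + iε)² dβ`, for `Im ω > 0`. -/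
theorem cauchy_integral_double_pole_bound (ω : ℂ) (hω : 0 < ω.im) :
    ∃ C > 0, ∃ c > 0, ∀ ρ : ℝ, 0 < ρ → ∀ ε : ℝ, ε ≠ 0 →
      ‖∫ β in (-1:ℝ)..1,
          Complex.exp (Complex.I * ω * (ρ : ℂ) * (Real.cosh β : ℂ)) / ((β : ℂ) + Complex.I * (ε : ℂ))^2‖
        ≤ C * Real.exp (-c * ρ) := by
  refine ⟨4 * ‖ω‖ / ω.im + 2, by positivity, ω.im / 2, by positivity, fun ρ hρ ε hε => ?_⟩
  set K : ℝ := ‖ω‖ * ρ * Real.exp (-ω.im * ρ) with hK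
  set A : ℂ := Complex.exp (Complex.I * ω * ρ) with hA
  have hK0 : 0 ≤ K := by positivity
  have hne := fun β : ℝ => add_I_mul_ne_zero β ε hε
  have hsplit : ∀ β : ℝ, Complex.exp (Complex.I * ω * (ρ : ℂ) * (Real.cosh β : ℂ))
        / ((β : ℂ) + Complex.I * (ε : ℂ)) ^ 2
      = (Complex.exp (Complex.I * ω * (ρ : ℂ) * (Real.cosh β : ℂ)) - A)
          / ((β : ℂ) + Complex.I * (ε : ℂ)) ^ 2
        + A * (1 / ((β : ℂ) + Complex.I * (ε : ℂ)) ^ 2) := fun β => by ring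
  have hcont : Continuous fun β : ℝ =>
      (Complex.exp (Complex.I * ω * (ρ : ℂ) * (Real.cosh β : ℂ)) - A)
        / ((β : ℂ) + Complex.I * (ε : ℂ)) ^ 2 := by
    refine Continuous.div ?_ (by fun_prop) fun β => pow_ne_zero 2 (hne β)
    have := Real.continuous_cosh
    fun_prop
  simp_rw [hsplit]
  rw [intervalIntegral.integral_add (hcont.intervalIntegrable _ _)
    (((continuous_inv_sq_add_I_mul ε hε).intervalIntegrable _ _).const_mul A),
    intervalIntegral.integral_const_mul]
  have hreg : ‖∫ β in (-1:ℝ)..1, (Complex.exp (Complex.I * ω * (ρ : ℂ) * (Real.cosh β : ℂ)) - A)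
      / ((β : ℂ) + Complex.I * (ε : ℂ)) ^ 2‖ ≤ K * |1 - (-1:ℝ)| := by
    refine intervalIntegral.norm_integral_le_of_norm_le_const fun β hβ => ?_
    rw [uIoc_of_le (by norm_num)] at hβ
    have hβ2 : β ^ 2 ≤ 1 := by nlinarith [hβ.1, hβ.2]
    have hpos : 0 < ‖(β : ℂ) + Complex.I * (ε : ℂ)‖ := norm_pos_iff.2 (hne β)
    rw [norm_div, norm_pow, div_le_iff₀ (by positivity)]
    refine (norm_exp_cosh_sub_le ω hω ρ hρ β hβ2).trans ?_
    rw [← sq_abs β]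
    gcongr
    exact abs_le_norm_add_I_mul β ε
  have hpole := norm_integral_double_pole_le ε hε
  have hAn : ‖A‖ = Real.exp (-ω.im * ρ) := by
    rw [hA, Complex.norm_exp, Complex.re_mul_ofReal, Complex.I_mul_re]
  set E : ℝ := Real.exp (-(ω.im / 2) * ρ) with hE
  have hE0 : 0 < E := Real.exp_pos _
  have hEE : Real.exp (-ω.im * ρ) = E * E := by
    rw [hE, ← Real.exp_add]
    congr 1
    ring
  have hE1 : E ≤ 1 := by
    rw [hE]
    exact Real.exp_le_one_iff.2 (by nlinarith [mul_pos hω hρ])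
  -- `t * exp (-t) ≤ 1` at `t = ω₂ ρ / 2`
  have hρE : ρ * E ≤ 2 / ω.im := by
    have h1 : ω.im / 2 * ρ ≤ Real.exp (ω.im / 2 * ρ) := by
      linarith [Real.add_one_le_exp (ω.im / 2 * ρ)]
    have h2 : Real.exp (ω.im / 2 * ρ) * E = 1 := by
      rw [hE, ← Real.exp_add]
      simp
    rw [le_div_iff₀ hω]
    nlinarith [mul_le_mul_of_nonneg_right h1 hE0.le]
  have hKE : K ≤ ‖ω‖ * (2 / ω.im) * E := by
    calc K = ‖ω‖ * (ρ * E) * E := by rw [hK, hEE]; ring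
      _ ≤ _ := by gcongr
  refine (norm_add_le _ _).trans ?_
  rw [norm_mul, hAn, hEE]
  calc _ ≤ K * |1 - (-1:ℝ)| + E * E * 2 := by gcongr
    _ = 2 * K + E * E * 2 := by norm_num; ring
    _ ≤ 2 * (‖ω‖ * (2 / ω.im) * E) + 1 * E * 2 := by gcongr
    _ = _ := by ring
end

section
/- For every ω ∈ ℂ with Im ω > 0 there exist constants C > 0 and c > 0 (depending only on ω and α) such that for all ρ > 0 and all φ ∈ [0, 2π] \ {φ₊, φ₋}: |∫_ℝ 𝒵(β, φ) sinh β · e^{iωρ cosh β} dβ| ≤ C e^{−cρ} (1 + ρ^{−1/2}), uniformly in φ. -/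
/-!
The integrand is bounded pointwise, uniformly in `φ`, and the bound integrates to a Gaussian.

`Zker` is a combination of two differences `coth (x + ia) - coth (x + ib)` with `x = β / 4`. Each
difference equals `sinh (i (b - a)) / (sinh (x + ia) sinh (x + ib))`. Since
`‖sinh (x + ia)‖² = sinh² x + sin² a` dominates both `sinh² x` and `sin² a cosh² x`, and
`|sin (b - a)| ≤ |sin a| + |sin b|`, the difference times `sinh x cosh x` is bounded by `2` whatever
`a` and `b` are (`norm_ccoth_sub_mul_le`): the zero of `sinh β` at `β = 0` absorbs the pole of the
kernel that approaches the real line as `φ → π ± α`. As `sinh β = 4 sinh x cosh x cosh (2 x)`, this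
gives `‖Zker α β φ * sinh β‖ ≤ 16 cosh (β / 2)` (`norm_Zker_mul_sinh_le`).

Finally, with `κ = ρ Im ω`, the exponential has modulus
`exp (-κ cosh β) = exp (-κ) exp (-2 κ sinh² (β / 2))`, and the substitution `s = sinh (β / 2)` gives
`∫ cosh (β / 2) exp (-κ cosh β) dβ = 2 exp (-κ) √(π / (2 κ))`, which is `O(exp (-κ) ρ^(-1/2))`.
-/

open Real MeasureTheory Set Filter

theorem norm_sq_sinh_add_I (x a : ℝ) :
    ‖Complex.sinh ((x : ℂ) + a * Complex.I)‖ ^ 2 = Real.sinh x ^ 2 + Real.sin a ^ 2 := by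
  have h : Complex.sinh ((x : ℂ) + a * Complex.I)
      = ((Real.sinh x * Real.cos a : ℝ) : ℂ) + ((Real.cosh x * Real.sin a : ℝ) : ℂ) * Complex.I := by
    rw [Complex.sinh_add, Complex.cosh_mul_I, Complex.sinh_mul_I]
    push_cast
    ring
  rw [h, Complex.sq_norm, Complex.normSq_add_mul_I]
  have h1 := Real.sin_sq_add_cos_sq a
  have h2 := Real.cosh_sq x
  rw [mul_pow, mul_pow, h2]
  linear_combination (Real.sinh x ^ 2) * h1

theorem abs_sinh_le_norm (x a : ℝ) :
    |Real.sinh x| ≤ ‖Complex.sinh ((x : ℂ) + a * Complex.I)‖ := by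
  refine abs_le_of_sq_le_sq ?_ (norm_nonneg _)
  rw [norm_sq_sinh_add_I]
  nlinarith [sq_nonneg (Real.sin a)]

theorem abs_sin_mul_cosh_le_norm (x a : ℝ) :
    |Real.sin a| * Real.cosh x ≤ ‖Complex.sinh ((x : ℂ) + a * Complex.I)‖ := by
  apply le_of_sq_le_sq _ (norm_nonneg _)
  rw [norm_sq_sinh_add_I, mul_pow, sq_abs, Real.cosh_sq]
  nlinarith [mul_nonneg (sq_nonneg (Real.sinh x)) (sq_nonneg (Real.cos a)),
    Real.sin_sq_add_cos_sq a]

/-- The key estimate: it is uniform in the imaginary shifts `a` and `b`, including the values for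
which one of the two hyperbolic cotangents has a pole at `x = 0`. -/
theorem norm_ccoth_sub_mul_le (x a b : ℝ) :
    ‖ccoth ((x : ℂ) + a * Complex.I) - ccoth ((x : ℂ) + b * Complex.I)‖
      * (|Real.sinh x| * Real.cosh x) ≤ 2 := by
  rcases eq_or_ne x 0 with rfl | hx
  · simp
  have hs : 0 < |Real.sinh x| := abs_pos.2 (by simpa [Real.sinh_eq_zero] using hx)
  set A := Complex.sinh ((x : ℂ) + a * Complex.I) with hA
  set B := Complex.sinh ((x : ℂ) + b * Complex.I) with hB
  have hA1 : |Real.sinh x| ≤ ‖A‖ := abs_sinh_le_norm x a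
  have hB1 : |Real.sinh x| ≤ ‖B‖ := abs_sinh_le_norm x b
  have hA2 : |Real.sin a| * Real.cosh x ≤ ‖A‖ := abs_sin_mul_cosh_le_norm x a
  have hB2 : |Real.sin b| * Real.cosh x ≤ ‖B‖ := abs_sin_mul_cosh_le_norm x b
  have hA0 : 0 < ‖A‖ := hs.trans_le hA1
  have hB0 : 0 < ‖B‖ := hs.trans_le hB1
  have hdiff : ccoth ((x : ℂ) + a * Complex.I) - ccoth ((x : ℂ) + b * Complex.I)
      = ((Real.sin (b - a) : ℝ) : ℂ) * Complex.I / (A * B) := by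
    have e : ((Real.sin (b - a) : ℝ) : ℂ) * Complex.I
        = Complex.sinh (((x : ℂ) + b * Complex.I) - ((x : ℂ) + a * Complex.I)) := by
      rw [Complex.ofReal_sin, ← Complex.sinh_mul_I]
      congr 1
      push_cast
      ring
    rw [e, Complex.sinh_sub, ccoth, ccoth, div_sub_div _ _ (norm_pos_iff.1 hA0) (norm_pos_iff.1 hB0)]
    congr 1
    ring
  have hsin : |Real.sin (b - a)| ≤ |Real.sin a| + |Real.sin b| := by
    rw [Real.sin_sub]
    refine (abs_sub _ _).trans ?_
    rw [abs_mul, abs_mul]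
    nlinarith [Real.abs_cos_le_one a, Real.abs_cos_le_one b, abs_nonneg (Real.sin a),
      abs_nonneg (Real.sin b)]
  rw [hdiff, norm_div, norm_mul, norm_mul, Complex.norm_I, mul_one, Complex.norm_real,
    Real.norm_eq_abs, div_mul_eq_mul_div, div_le_iff₀ (mul_pos hA0 hB0)]
  have h1 : |Real.sin (b - a)| * Real.cosh x ≤ ‖A‖ + ‖B‖ := by
    nlinarith [Real.cosh_pos x]
  calc |Real.sin (b - a)| * (|Real.sinh x| * Real.cosh x)
      = |Real.sinh x| * (|Real.sin (b - a)| * Real.cosh x) := by ring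
    _ ≤ |Real.sinh x| * (‖A‖ + ‖B‖) := by gcongr
    _ ≤ 2 * (‖A‖ * ‖B‖) := by nlinarith

theorem norm_Zker_mul_sinh_le (α β φ : ℝ) :
    ‖Zker α β φ * (Real.sinh β : ℂ)‖ ≤ 16 * Real.cosh (β / 2) := by
  set x := β / 4 with hx
  have hZ : Zker α β φ =
      -(ccoth ((x : ℂ) + ((π - φ + α) / 4 : ℝ) * Complex.I)
        - ccoth ((x : ℂ) + ((π - φ - α) / 4 : ℝ) * Complex.I))
      + (ccoth ((x : ℂ) + ((-π - φ + α) / 4 : ℝ) * Complex.I)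
        - ccoth ((x : ℂ) + ((-π - φ - α) / 4 : ℝ) * Complex.I)) := by
    unfold Zker Zfun Ufun
    rw [hx]
    push_cast
    refine congrArg₂ (· + ·)
      (congrArg Neg.neg (congrArg₂ (· - ·) (congrArg ccoth ?_) (congrArg ccoth ?_)))
      (congrArg₂ (· - ·) (congrArg ccoth ?_) (congrArg ccoth ?_)) <;> ring
  have hsinh : |Real.sinh β| = |Real.sinh x| * Real.cosh x * (4 * Real.cosh (β / 2)) := by
    have e : Real.sinh β = Real.sinh x * Real.cosh x * (4 * Real.cosh (β / 2)) := by
      have e1 : β = 2 * (β / 2) := by ring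
      have e2 : Real.sinh (β / 2) = 2 * Real.sinh x * Real.cosh x := by
        rw [← Real.sinh_two_mul, hx]
        congr 1
        ring
      nth_rewrite 1 [e1]
      rw [Real.sinh_two_mul, e2]
      ring
    rw [e, abs_mul, abs_mul, abs_of_pos (Real.cosh_pos x),
      abs_of_pos (mul_pos (by norm_num) (Real.cosh_pos (β / 2)))]
  rw [norm_mul, Complex.norm_real, Real.norm_eq_abs, hsinh, hZ]
  have k1 := norm_ccoth_sub_mul_le x ((π - φ + α) / 4) ((π - φ - α) / 4)
  have k2 := norm_ccoth_sub_mul_le x ((-π - φ + α) / 4) ((-π - φ - α) / 4)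
  set D₁ := ccoth ((x : ℂ) + ((π - φ + α) / 4 : ℝ) * Complex.I)
        - ccoth ((x : ℂ) + ((π - φ - α) / 4 : ℝ) * Complex.I)
  set D₂ := ccoth ((x : ℂ) + ((-π - φ + α) / 4 : ℝ) * Complex.I)
        - ccoth ((x : ℂ) + ((-π - φ - α) / 4 : ℝ) * Complex.I)
  have hn : ‖-D₁ + D₂‖ ≤ ‖D₁‖ + ‖D₂‖ := (norm_add_le _ _).trans (by rw [norm_neg])
  have hp : 0 ≤ |Real.sinh x| * Real.cosh x := mul_nonneg (abs_nonneg _) (Real.cosh_pos x).le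
  have hc := Real.cosh_pos (β / 2)
  calc ‖-D₁ + D₂‖ * (|Real.sinh x| * Real.cosh x * (4 * Real.cosh (β / 2)))
      ≤ (‖D₁‖ + ‖D₂‖) * (|Real.sinh x| * Real.cosh x * (4 * Real.cosh (β / 2))) := by gcongr
    _ = (‖D₁‖ * (|Real.sinh x| * Real.cosh x) + ‖D₂‖ * (|Real.sinh x| * Real.cosh x))
          * (4 * Real.cosh (β / 2)) := by ring
    _ ≤ (2 + 2) * (4 * Real.cosh (β / 2)) := by gcongr
    _ = 16 * Real.cosh (β / 2) := by ring

/-- The Gaussian integral after the substitution `s = sinh (β / 2)`, together with the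
integrability of the integrand. -/
theorem gaussian_sinh_half {κ : ℝ} (hκ : 0 < κ) :
    Integrable (fun β : ℝ => Real.cosh (β / 2) / 2 * Real.exp (-κ * Real.sinh (β / 2) ^ 2)) ∧
    ∫ β : ℝ, Real.cosh (β / 2) / 2 * Real.exp (-κ * Real.sinh (β / 2) ^ 2) = √(π / κ) := by
  have hd : ∀ β ∈ (univ : Set ℝ), HasDerivWithinAt (fun β : ℝ => Real.sinh (β / 2))
      (Real.cosh (β / 2) / 2) univ β := by
    intro β _
    have h := ((hasDerivAt_id β).div_const 2).sinh
    simp only [id, mul_one_div] at h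
    exact h.hasDerivWithinAt
  have hinj : InjOn (fun β : ℝ => Real.sinh (β / 2)) univ := by
    intro u _ v _ h
    have := Real.sinh_injective h
    linarith
  have himg : (fun β : ℝ => Real.sinh (β / 2)) '' univ = univ := by
    rw [image_univ, range_eq_univ]
    intro y
    obtain ⟨t, ht⟩ := Real.sinh_surjective y
    exact ⟨2 * t, by simpa using ht⟩
  have habs : ∀ β : ℝ, |Real.cosh (β / 2) / 2| = Real.cosh (β / 2) / 2 := fun β =>
    abs_of_pos (half_pos (Real.cosh_pos _))
  have h1 := integrableOn_image_iff_integrableOn_abs_deriv_smul MeasurableSet.univ hd hinj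
    (fun s => Real.exp (-κ * s ^ 2))
  have h2 := integral_image_eq_integral_abs_deriv_smul MeasurableSet.univ hd hinj
    (fun s => Real.exp (-κ * s ^ 2))
  simp only [himg, integrableOn_univ, Measure.restrict_univ, habs, smul_eq_mul] at h1 h2
  exact ⟨h1.1 (integrable_exp_neg_mul_sq hκ), by rw [← h2, integral_gaussian]⟩

/-- Uniform bound `C e^{−cρ}(1 + ρ^{−1/2})` for the `φ`-derivative integral
`∫_ℝ 𝒵(β,φ) sinh β · e^{iωρ cosh β} dβ`, uniformly over `φ ∈ [0,2π] \ {φ₊, φ₋}`. -/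
theorem diffracted_integral_sinh_bound (α : ℝ) (hα : α ∈ Set.Ioo (π/2) π)
    (ω : ℂ) (hω : 0 < ω.im) :
    ∃ C > 0, ∃ c > 0, ∀ ρ : ℝ, 0 < ρ →
      ∀ φ ∈ Set.Icc (0:ℝ) (2*π), φ ≠ π + α → φ ≠ π - α →
      ‖∫ β : ℝ, Zker α β φ * (Real.sinh β : ℂ) *
          Complex.exp (Complex.I * ω * (ρ : ℂ) * (Real.cosh β : ℂ))‖
        ≤ C * Real.exp (-c * ρ) * (1 + ρ ^ (-(1/2) : ℝ)) := by
  have hC : 0 < 32 * √(π / (2 * ω.im)) := by positivity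
  refine ⟨32 * √(π / (2 * ω.im)), hC, ω.im, hω, ?_⟩
  intro ρ hρ φ _ _ _
  obtain ⟨hint, hval⟩ := gaussian_sinh_half (κ := 2 * (ω.im * ρ)) (by positivity)
  have hpt : ∀ β : ℝ, ‖Zker α β φ * (Real.sinh β : ℂ) *
      Complex.exp (Complex.I * ω * (ρ : ℂ) * (Real.cosh β : ℂ))‖
      ≤ 32 * Real.exp (-ω.im * ρ) * (Real.cosh (β / 2) / 2
        * Real.exp (-(2 * (ω.im * ρ)) * Real.sinh (β / 2) ^ 2)) := by
    intro β
    have hcosh : Real.cosh β = 1 + 2 * Real.sinh (β / 2) ^ 2 := by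
      have e : β = 2 * (β / 2) := by ring
      nth_rewrite 1 [e]
      rw [Real.cosh_two_mul, Real.cosh_sq]
      ring
    have hexp : ‖Complex.exp (Complex.I * ω * (ρ : ℂ) * (Real.cosh β : ℂ))‖
        = Real.exp (-ω.im * ρ) * Real.exp (-(2 * (ω.im * ρ)) * Real.sinh (β / 2) ^ 2) := by
      rw [Complex.norm_exp, ← Real.exp_add, Complex.re_mul_ofReal, Complex.re_mul_ofReal,
        Complex.I_mul_re, hcosh]
      congr 1
      ring
    rw [norm_mul, hexp]
    calc _ ≤ 16 * Real.cosh (β / 2) * (Real.exp (-ω.im * ρ)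
          * Real.exp (-(2 * (ω.im * ρ)) * Real.sinh (β / 2) ^ 2)) := by
          gcongr
          exact norm_Zker_mul_sinh_le α β φ
      _ = _ := by ring
  refine (norm_integral_le_of_norm_le (hint.const_mul _) (Eventually.of_forall hpt)).trans ?_
  rw [integral_const_mul, hval]
  have hsqrt : √(π / (2 * (ω.im * ρ))) = √(π / (2 * ω.im)) * ρ ^ (-(1/2) : ℝ) := by
    rw [Real.rpow_neg hρ.le, ← Real.sqrt_eq_rpow, ← Real.sqrt_inv, ← Real.sqrt_mul (by positivity)]
    congr 1
    field_simp
  rw [hsqrt]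
  have hpos : 0 ≤ 32 * √(π / (2 * ω.im)) * Real.exp (-ω.im * ρ) := by positivity
  linarith
end

section
/- Let ω ∈ ℂ with Im ω > 0. Define A_d(ρ, φ) = ∫_ℝ 𝒵(β, φ) e^{iωρ cosh β} dβ for ρ > 0 and φ ∈ (0, 2π) \ {φ₊, φ₋}. Then A_d is twice continuously differentiable in (ρ, φ) on this region and satisfies the Helmholtz equation in polar coordinates: ∂²_ρ A_d + ρ^{−1} ∂_ρ A_d + ρ^{−2} ∂²_φ A_d + ω² A_d = 0. -/
/-!
After the shift `G(z) = Z(z + 2πi)` the kernel is `G(β - iφ)`, a sum of four terms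
`± coth((β + i(c - φ))/4)` with `c = ±π ± α`. From `|coth z| ≤ 1/|sin(Im z)|`, `G` is holomorphic
and bounded on a horizontal strip around each line `Im z = -φ` with `φ ∈ (0, 2π)`, `φ ≠ π ± α`
(`stripBdd_kernel`); by Cauchy's estimate so are all its derivatives (`StripBdd.deriv`).
Because `|e^{iωρ cosh β}| = e^{-ρ Im ω cosh β}` decays doubly exponentially, boundedness of the
kernel is all that convergence requires.

Smoothness: the integrals `J ω G m (ρ, φ) = ∫ G(β - iφ) cosh(β)^m e^{iωρ cosh β} dβ` satisfy
`∂_ρ J(G, m) = iω J(G, m+1)` and `∂_φ J(G, m) = -i J(G', m)` by dominated convergence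
(`hasFDerivAt_J`), so the whole family is smooth by induction (`contDiffOn_J`).

Equation: `∂_φ² J(G, 0) = -J(G'', 0)`, and two integrations by parts move both `β`-derivatives onto
the exponential (`J_deriv_deriv`). There `∂_β² e^{iωρ cosh β}` equals
`(ρ²∂_ρ² + ρ∂_ρ + ω²ρ²) e^{iωρ cosh β}` since `cosh² - sinh² = 1`, and the terms cancel.
-/


open Real MeasureTheory Set Filter

/-! ### Functions holomorphic and bounded on horizontal strips -/

/-- `G` is holomorphic and bounded on some open horizontal strip around the line `Im z = -φ`,
the line traced by `β - iφ` for real `β`. -/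
def StripBdd (G : ℂ → ℂ) (φ : ℝ) : Prop :=
  ∃ ε > 0, ∃ C : ℝ, ∀ z : ℂ, |z.im + φ| < ε → DifferentiableAt ℂ G z ∧ ‖G z‖ ≤ C

lemma StripBdd.neg {G : ℂ → ℂ} {φ : ℝ} (h : StripBdd G φ) : StripBdd (fun z => -G z) φ := by
  obtain ⟨ε, hε, C, hC⟩ := h
  exact ⟨ε, hε, C, fun z hz => ⟨(hC z hz).1.neg, by simpa using (hC z hz).2⟩⟩

lemma StripBdd.add {G H : ℂ → ℂ} {φ : ℝ} (hG : StripBdd G φ) (hH : StripBdd H φ) :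
    StripBdd (fun z => G z + H z) φ := by
  obtain ⟨ε, hε, C, hC⟩ := id hG
  obtain ⟨δ, hδ, D, hD⟩ := hH
  refine ⟨min ε δ, lt_min hε hδ, C + D, fun z hz => ?_⟩
  have h1 := hC z (hz.trans_le (min_le_left _ _))
  have h2 := hD z (hz.trans_le (min_le_right _ _))
  exact ⟨h1.1.add h2.1, (norm_add_le _ _).trans (add_le_add h1.2 h2.2)⟩

/-- Cauchy's estimate on discs of fixed radius: strip-boundedness passes to the derivative. -/
lemma StripBdd.deriv {G : ℂ → ℂ} {φ : ℝ} (h : StripBdd G φ) : StripBdd (deriv G) φ := by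
  obtain ⟨ε, hε, C, hC⟩ := h
  have hopen : IsOpen {z : ℂ | |z.im + φ| < ε} :=
    isOpen_lt (by fun_prop) continuous_const
  have hd : DifferentiableOn ℂ G {z : ℂ | |z.im + φ| < ε} :=
    fun z hz => (hC z hz).1.differentiableWithinAt
  refine ⟨ε / 2, by positivity, C / (ε / 4), fun z hz => ⟨?_, ?_⟩⟩
  · exact (hd.deriv hopen).differentiableAt
      (hopen.mem_nhds (show |z.im + φ| < ε by linarith))
  · have hsub : Metric.closedBall z (ε / 4) ⊆ {z : ℂ | |z.im + φ| < ε} := by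
      intro w hw
      have h1 : |(w - z).im| ≤ ε / 4 :=
        (Complex.abs_im_le_norm _).trans (by simpa [dist_eq_norm] using hw)
      simp only [Complex.sub_im] at h1
      have h2 : |w.im + φ| ≤ |w.im - z.im| + |z.im + φ| := by
        have := abs_add_le (w.im - z.im) (z.im + φ)
        ring_nf at this ⊢
        exact this
      show |w.im + φ| < ε
      linarith
    refine Complex.norm_deriv_le_of_forall_mem_sphere_norm_le (by positivity) ?_ fun w hw =>
      (hC w (hsub (Metric.sphere_subset_closedBall hw))).2
    refine DifferentiableOn.diffContOnCl (hd.mono ?_)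
    rw [closure_ball _ (by positivity)]
    exact hsub

lemma StripBdd.eventually {G : ℂ → ℂ} {φ : ℝ} (h : StripBdd G φ) :
    ∀ᶠ t in nhds φ, StripBdd G t := by
  obtain ⟨ε, hε, C, hC⟩ := h
  filter_upwards [Metric.ball_mem_nhds φ (half_pos hε)] with t ht
  rw [Metric.mem_ball, Real.dist_eq] at ht
  refine ⟨ε / 2, by positivity, C, fun z hz => hC z ?_⟩
  rw [abs_lt] at *
  constructor <;> linarith

lemma StripBdd.hasDerivAt {G : ℂ → ℂ} {φ : ℝ} (h : StripBdd G φ) (β : ℝ) :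
    HasDerivAt G (_root_.deriv G (β - Complex.I * φ)) (β - Complex.I * φ) := by
  obtain ⟨ε, hε, C, hC⟩ := h
  exact (hC _ (by simpa using hε)).1.hasDerivAt

lemma StripBdd.hasDerivAt_line {G : ℂ → ℂ} {φ : ℝ} (h : StripBdd G φ) (β : ℝ) :
    HasDerivAt (fun b : ℝ => G (b - Complex.I * φ)) (_root_.deriv G (β - Complex.I * φ)) β :=
  HasDerivAt.comp_ofReal (e := fun z => G (z - Complex.I * φ))
    ((h.hasDerivAt β).comp_sub_const (β : ℂ) (Complex.I * φ))

lemma StripBdd.continuous_line {G : ℂ → ℂ} {φ : ℝ} (h : StripBdd G φ) :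
    Continuous (fun b : ℝ => G (b - Complex.I * φ)) :=
  continuous_iff_continuousAt.2 fun β => (h.hasDerivAt_line β).continuousAt

/-! ### The kernel is holomorphic and bounded on strips -/

lemma norm_sq_sinh (z : ℂ) :
    ‖Complex.sinh z‖ ^ 2 = Real.sinh z.re ^ 2 + Real.sin z.im ^ 2 := by
  conv_lhs => rw [← Complex.re_add_im z, Complex.sinh_add, Complex.sinh_mul_I, Complex.cosh_mul_I]
  rw [← Complex.ofReal_sinh, ← Complex.ofReal_cosh, ← Complex.ofReal_sin, ← Complex.ofReal_cos,
    Complex.sq_norm, Complex.normSq_apply]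
  simp only [Complex.add_re, Complex.add_im, Complex.mul_re, Complex.mul_im, Complex.ofReal_re,
    Complex.ofReal_im, Complex.I_re, Complex.I_im]
  linear_combination Real.sinh z.re ^ 2 * Real.sin_sq_add_cos_sq z.im
    + Real.sin z.im ^ 2 * Real.cosh_sq z.re

lemma norm_sq_cosh (z : ℂ) :
    ‖Complex.cosh z‖ ^ 2 = Real.sinh z.re ^ 2 + Real.cos z.im ^ 2 := by
  conv_lhs => rw [← Complex.re_add_im z, Complex.cosh_add, Complex.sinh_mul_I, Complex.cosh_mul_I]
  rw [← Complex.ofReal_sinh, ← Complex.ofReal_cosh, ← Complex.ofReal_sin, ← Complex.ofReal_cos,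
    Complex.sq_norm, Complex.normSq_apply]
  simp only [Complex.add_re, Complex.add_im, Complex.mul_re, Complex.mul_im, Complex.ofReal_re,
    Complex.ofReal_im, Complex.I_re, Complex.I_im]
  linear_combination Real.sinh z.re ^ 2 * Real.sin_sq_add_cos_sq z.im
    + Real.cos z.im ^ 2 * Real.cosh_sq z.re

lemma sinh_ne_zero_of_sin_im {z : ℂ} (h : Real.sin z.im ≠ 0) : Complex.sinh z ≠ 0 := by
  intro h0
  have := norm_sq_sinh z
  rw [h0] at this
  have h2 : 0 < Real.sin z.im ^ 2 := by positivity
  simp at this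
  nlinarith [sq_nonneg (Real.sinh z.re)]

/-- On a horizontal line, `coth` is bounded by `1 / |sin (Im z)|`. -/
lemma norm_ccoth_le {z : ℂ} (h : Real.sin z.im ≠ 0) : ‖ccoth z‖ ≤ 1 / |Real.sin z.im| := by
  have hs := sinh_ne_zero_of_sin_im h
  rw [ccoth, norm_div, div_le_div_iff₀ (norm_pos_iff.2 hs) (abs_pos.2 h), one_mul]
  refine abs_le_of_sq_le_sq' ?_ (norm_nonneg _) |>.2
  rw [mul_pow, sq_abs, norm_sq_sinh, norm_sq_cosh]
  nlinarith [Real.sin_sq_add_cos_sq z.im, sq_nonneg (Real.sinh z.re), sq_nonneg (Real.sin z.im),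
    sq_nonneg (Real.cos z.im), mul_nonneg (sq_nonneg (Real.sinh z.re)) (sq_nonneg (Real.cos z.im)),
    sq_nonneg (Real.sin z.im ^ 2)]

lemma stripBdd_ccoth {c φ : ℝ} (h : Real.sin ((c - φ) / 4) ≠ 0) :
    StripBdd (fun z => ccoth ((1 / 4 : ℂ) * (z + Complex.I * c))) φ := by
  have hcont : Continuous fun t : ℝ => |Real.sin ((c - t) / 4)| := by fun_prop
  have hpos : 0 < |Real.sin ((c - φ) / 4)| := abs_pos.2 h
  obtain ⟨ε, hε, hb⟩ := Metric.eventually_nhds_iff.1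
    (hcont.continuousAt.eventually (lt_mem_nhds (half_lt_self hpos)))
  refine ⟨ε, hε, 1 / (|Real.sin ((c - φ) / 4)| / 2), fun z hz => ?_⟩
  have him : ((1 / 4 : ℂ) * (z + Complex.I * c)).im = (c - -z.im) / 4 := by
    have : ((1 / 4 : ℂ) * (z + Complex.I * c)) = ((1 / 4 : ℝ) : ℂ) * (z + Complex.I * c) := by
      push_cast; ring
    rw [this, Complex.im_ofReal_mul]
    simp
    ring
  have hlt := hb (y := -z.im) (by
    rw [Real.dist_eq, ← abs_neg]; convert hz using 2; ring)
  rw [← him] at hlt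
  have hne : Real.sin ((1 / 4 : ℂ) * (z + Complex.I * c)).im ≠ 0 :=
    abs_pos.1 ((half_pos hpos).trans hlt)
  refine ⟨?_, (norm_ccoth_le hne).trans ?_⟩
  · unfold ccoth
    exact DifferentiableAt.div (by fun_prop) (by fun_prop) (sinh_ne_zero_of_sin_im hne)
  · exact one_div_le_one_div_of_le (half_pos hpos) hlt.le

lemma stripBdd_kernel {α φ : ℝ} (hα : α ∈ Set.Ioo (π / 2) π) (hφ : φ ∈ Set.Ioo 0 (2 * π))
    (h1 : φ ≠ π + α) (h2 : φ ≠ π - α) :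
    StripBdd (fun z => Zfun α (z + 2 * (π : ℝ) * Complex.I)) φ := by
  obtain ⟨ha, hb⟩ := hα
  obtain ⟨hc, hd⟩ := hφ
  have hpi := Real.pi_pos
  have key : ∀ c : ℝ, -2 * π ≤ c → c ≤ 2 * π → φ ≠ c →
      StripBdd (fun z => ccoth ((1 / 4 : ℂ) * (z + Complex.I * c))) φ := by
    intro c hc1 hc2 hne
    apply stripBdd_ccoth
    -- `|c - φ| < 4π`, so the only possible pole of this term on `(0, 2π)` is `φ = c`.
    rw [Ne, Real.sin_eq_zero_iff_of_lt_of_lt (by linarith) (by linarith)]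
    intro h0
    apply hne
    linarith
  have k1 := key (π + α) (by linarith) (by linarith) h1
  have k2 := key (π - α) (by linarith) (by linarith) h2
  have k3 := key (-π + α) (by linarith) (by linarith) (by linarith)
  have k4 := key (-π - α) (by linarith) (by linarith) (by linarith)
  convert (k1.neg.add k2).add (k3.add k4.neg) using 2 with z
  unfold Zfun Ufun
  rw [neg_sub, neg_add_eq_sub, ← sub_eq_add_neg]
  push_cast
  ring_nf

/-! ### Integrability -/

/-- The family of integrals `∫ G(β - iφ) cosh(β)^m e^{iωρ cosh β} dβ`, which is closed under
differentiation in `ρ` and in `φ`. -/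
noncomputable def J (ω : ℂ) (G : ℂ → ℂ) (m : ℕ) (x : ℝ × ℝ) : ℂ :=
  ∫ β : ℝ, G (β - Complex.I * x.2) * ((Real.cosh β : ℂ) ^ m *
    Complex.exp (Complex.I * ω * (x.1 : ℂ) * (Real.cosh β : ℂ)))

lemma norm_exp_phase (ω : ℂ) (ρ β : ℝ) :
    ‖Complex.exp (Complex.I * ω * (ρ : ℂ) * (Real.cosh β : ℂ))‖
      = Real.exp (-(ω.im * ρ * Real.cosh β)) := by
  rw [Complex.norm_exp]
  congr 1
  simp [Complex.mul_re, Complex.mul_im, -Complex.ofReal_cosh]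

lemma integrable_cosh_pow_mul_exp (m : ℕ) {c : ℝ} (hc : 0 < c) :
    Integrable fun β : ℝ => Real.cosh β ^ m * Real.exp (-(c * Real.cosh β)) := by
  -- `1 + β² ≤ cosh² β` and `(c cosh β)^(m+2) / (m+2)! ≤ e^{c cosh β}` give an `O(1/(1+β²))` bound.
  refine (integrable_inv_one_add_sq.const_mul
    (((m + 2).factorial : ℝ) / c ^ (m + 2))).mono' (by fun_prop) ?_
  refine Eventually.of_forall fun β => ?_
  have hch : 0 < Real.cosh β := Real.cosh_pos β
  rw [Real.norm_of_nonneg (by positivity)]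
  have h1 := Real.pow_div_factorial_le_exp (c * Real.cosh β) (by positivity) (m + 2)
  have h2 : 1 + β ^ 2 ≤ Real.cosh β ^ 2 := by
    have : |β| ≤ |Real.sinh β| := by
      rw [Real.abs_sinh]; exact Real.self_le_sinh_iff.2 (abs_nonneg β)
    rw [Real.cosh_sq]
    linarith [sq_le_sq.2 this]
  rw [Real.exp_neg, ← div_eq_mul_inv, ← div_eq_mul_inv, div_div,
    div_le_div_iff₀ (by positivity) (by positivity)]
  have hf : (0 : ℝ) < (m + 2).factorial := by positivity
  rw [div_le_iff₀ hf] at h1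
  calc Real.cosh β ^ m * (c ^ (m + 2) * (1 + β ^ 2))
      ≤ Real.cosh β ^ m * (c ^ (m + 2) * Real.cosh β ^ 2) := by gcongr
    _ = (c * Real.cosh β) ^ (m + 2) := by ring
    _ ≤ _ := by linarith

lemma integrable_kernel {ω : ℂ} (hω : 0 < ω.im) {G : ℂ → ℂ} {ρ φ : ℝ} (hρ : 0 < ρ)
    (hG : StripBdd G φ) (m : ℕ) {h : ℝ → ℂ} (hcont : Continuous h)
    (hh : ∀ β, ‖h β‖ ≤ Real.cosh β ^ m) :
    Integrable fun β : ℝ => G (β - Complex.I * φ) * (h β *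
      Complex.exp (Complex.I * ω * (ρ : ℂ) * (Real.cosh β : ℂ))) := by
  have hGc := hG.continuous_line
  obtain ⟨ε, hε, C, hC⟩ := hG
  refine ((integrable_cosh_pow_mul_exp m (mul_pos hω hρ)).const_mul C).mono' ?_ ?_
  · refine Continuous.aestronglyMeasurable (hGc.mul (hcont.mul ?_))
    fun_prop
  · refine Eventually.of_forall fun β => ?_
    rw [norm_mul, norm_mul, norm_exp_phase]
    have := (hC (β - Complex.I * φ) (by simpa using hε)).2
    have := (norm_nonneg _).trans this
    gcongr
    exact hh β

lemma integrable_J {ω : ℂ} (hω : 0 < ω.im) {G : ℂ → ℂ} {ρ φ : ℝ} (hρ : 0 < ρ)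
    (hG : StripBdd G φ) (m : ℕ) :
    Integrable fun β : ℝ => G (β - Complex.I * φ) * ((Real.cosh β : ℂ) ^ m *
      Complex.exp (Complex.I * ω * (ρ : ℂ) * (Real.cosh β : ℂ))) :=
  integrable_kernel hω hρ hG m (by fun_prop) fun β => by
    rw [norm_pow, Complex.norm_real, Real.norm_of_nonneg (Real.cosh_pos β).le]

/-! ### Differentiation under the integral sign -/

/-- The real-linear map `a ↦ (v ↦ v.1 • a)`. -/
noncomputable def L₁ : ℂ →L[ℝ] (ℝ × ℝ →L[ℝ] ℂ) :=
  ContinuousLinearMap.smulRightL ℝ (ℝ × ℝ) ℂ (ContinuousLinearMap.fst ℝ ℝ ℝ)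

/-- The real-linear map `a ↦ (v ↦ v.2 • a)`. -/
noncomputable def L₂ : ℂ →L[ℝ] (ℝ × ℝ →L[ℝ] ℂ) :=
  ContinuousLinearMap.smulRightL ℝ (ℝ × ℝ) ℂ (ContinuousLinearMap.snd ℝ ℝ ℝ)

lemma L₁_apply (a : ℂ) (v : ℝ × ℝ) : L₁ a v = v.1 * a := by
  simp [L₁]

lemma L₂_apply (a : ℂ) (v : ℝ × ℝ) : L₂ a v = v.2 * a := by
  simp [L₂]

lemma norm_L₁_le (a : ℂ) : ‖L₁ a‖ ≤ ‖a‖ := by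
  refine ContinuousLinearMap.opNorm_le_bound _ (norm_nonneg _) fun v => ?_
  rw [L₁_apply, norm_mul, Complex.norm_real, mul_comm]
  gcongr
  exact norm_fst_le v

lemma norm_L₂_le (a : ℂ) : ‖L₂ a‖ ≤ ‖a‖ := by
  refine ContinuousLinearMap.opNorm_le_bound _ (norm_nonneg _) fun v => ?_
  rw [L₂_apply, norm_mul, Complex.norm_real, mul_comm]
  gcongr
  exact norm_snd_le v

lemma hasFDerivAt_integrand (ω : ℂ) {G : ℂ → ℂ} (m : ℕ) (β : ℝ) {x : ℝ × ℝ}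
    (hG : StripBdd G x.2) :
    HasFDerivAt (fun y : ℝ × ℝ => G (β - Complex.I * y.2) * ((Real.cosh β : ℂ) ^ m *
        Complex.exp (Complex.I * ω * (y.1 : ℂ) * (Real.cosh β : ℂ))))
      (L₁ (Complex.I * ω * (G (β - Complex.I * x.2) * ((Real.cosh β : ℂ) ^ (m + 1) *
          Complex.exp (Complex.I * ω * (x.1 : ℂ) * (Real.cosh β : ℂ)))))
        + L₂ (-Complex.I * (deriv G (β - Complex.I * x.2) * ((Real.cosh β : ℂ) ^ m *
          Complex.exp (Complex.I * ω * (x.1 : ℂ) * (Real.cosh β : ℂ)))))) x := by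
  have f1 : HasFDerivAt (fun y : ℝ × ℝ => (y.1 : ℂ))
      (Complex.ofRealCLM.comp (ContinuousLinearMap.fst ℝ ℝ ℝ)) x :=
    (Complex.ofRealCLM.comp (ContinuousLinearMap.fst ℝ ℝ ℝ)).hasFDerivAt
  have f2 : HasFDerivAt (fun y : ℝ × ℝ => (y.2 : ℂ))
      (Complex.ofRealCLM.comp (ContinuousLinearMap.snd ℝ ℝ ℝ)) x :=
    (Complex.ofRealCLM.comp (ContinuousLinearMap.snd ℝ ℝ ℝ)).hasFDerivAt
  have g1 := ((f1.const_mul (Complex.I * ω)).mul_const (Real.cosh β : ℂ)).cexp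
  have g2 := ((hG.hasDerivAt β).hasFDerivAt.restrictScalars ℝ).comp x
    ((f2.const_mul Complex.I).const_sub (β : ℂ))
  refine (g2.mul (g1.const_mul ((Real.cosh β : ℂ) ^ m))).congr_fderiv ?_
  refine ContinuousLinearMap.ext fun v => ?_
  simp [L₁_apply, L₂_apply, -Complex.ofReal_cosh]
  ring

/-- Differentiation under the integral sign. On a neighbourhood of `x` with `ρ > x.1 / 2` and `φ` in
the strips where `G` and `G'` are bounded, the derivative of the integrand is dominated by powers of
`cosh β` times `e^{-(Im ω)(x.1 / 2) cosh β}`. -/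
lemma hasFDerivAt_J {ω : ℂ} (hω : 0 < ω.im) {G : ℂ → ℂ} (m : ℕ) {x : ℝ × ℝ} (hx : 0 < x.1)
    (hG : StripBdd G x.2) :
    HasFDerivAt (J ω G m)
      (L₁ (Complex.I * ω * J ω G (m + 1) x) + L₂ (-Complex.I * J ω (deriv G) m x)) x := by
  obtain ⟨ε, hε, C, hC⟩ := id hG
  obtain ⟨δ, hδ, D, hD⟩ := hG.deriv
  have i1 := (integrable_J hω hx hG (m + 1)).const_mul (Complex.I * ω)
  have i2 := (integrable_J hω hx hG.deriv m).const_mul (-Complex.I)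
  have hval : L₁ (Complex.I * ω * J ω G (m + 1) x) + L₂ (-Complex.I * J ω (deriv G) m x)
      = ∫ β : ℝ, (L₁ (Complex.I * ω * (G (β - Complex.I * x.2) * ((Real.cosh β : ℂ) ^ (m + 1) *
          Complex.exp (Complex.I * ω * (x.1 : ℂ) * (Real.cosh β : ℂ)))))
        + L₂ (-Complex.I * (deriv G (β - Complex.I * x.2) * ((Real.cosh β : ℂ) ^ m *
          Complex.exp (Complex.I * ω * (x.1 : ℂ) * (Real.cosh β : ℂ)))))) := by
    rw [integral_add (L₁.integrable_comp i1) (L₂.integrable_comp i2),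
      L₁.integral_comp_comm i1, L₂.integral_comp_comm i2, integral_const_mul, integral_const_mul]
    rfl
  rw [hval]
  have hs : {y : ℝ × ℝ | x.1 / 2 < y.1 ∧ StripBdd G y.2 ∧ |y.2 - x.2| < min ε δ} ∈ nhds x := by
    have e1 : ∀ᶠ y : ℝ × ℝ in nhds x, x.1 / 2 < y.1 :=
      continuous_fst.continuousAt.eventually (lt_mem_nhds (half_lt_self hx))
    have e2 : ∀ᶠ y : ℝ × ℝ in nhds x, StripBdd G y.2 :=
      continuous_snd.continuousAt.eventually hG.eventually
    have e3 : ∀ᶠ y : ℝ × ℝ in nhds x, |y.2 - x.2| < min ε δ := by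
      have : Continuous fun y : ℝ × ℝ => |y.2 - x.2| := by fun_prop
      exact this.continuousAt.eventually (gt_mem_nhds (by simp [hε, hδ]))
    exact e1.and (e2.and e3)
  have hhalf : 0 < ω.im * (x.1 / 2) := mul_pos hω (half_pos hx)
  refine hasFDerivAt_integral_of_dominated_of_fderiv_le (𝕜 := ℝ)
    (F := fun (y : ℝ × ℝ) (β : ℝ) => G (β - Complex.I * y.2) * ((Real.cosh β : ℂ) ^ m *
        Complex.exp (Complex.I * ω * (y.1 : ℂ) * (Real.cosh β : ℂ))))
    (F' := fun (x : ℝ × ℝ) (β : ℝ) =>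
      L₁ (Complex.I * ω * (G (β - Complex.I * x.2) * ((Real.cosh β : ℂ) ^ (m + 1) *
          Complex.exp (Complex.I * ω * (x.1 : ℂ) * (Real.cosh β : ℂ)))))
        + L₂ (-Complex.I * (deriv G (β - Complex.I * x.2) * ((Real.cosh β : ℂ) ^ m *
          Complex.exp (Complex.I * ω * (x.1 : ℂ) * (Real.cosh β : ℂ))))))
    (bound := fun β => ‖ω‖ * C * (Real.cosh β ^ (m + 1) *
        Real.exp (-(ω.im * (x.1 / 2) * Real.cosh β))) + D * (Real.cosh β ^ m *
        Real.exp (-(ω.im * (x.1 / 2) * Real.cosh β))))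
    hs ?_ (integrable_J hω hx hG m)
    ((L₁.integrable_comp i1).add (L₂.integrable_comp i2)).aestronglyMeasurable ?_
    (((integrable_cosh_pow_mul_exp (m + 1) hhalf).const_mul _).add
      ((integrable_cosh_pow_mul_exp m hhalf).const_mul _)) ?_
  · filter_upwards [hs] with y hy
    exact (integrable_J hω ((half_pos hx).trans hy.1) hy.2.1 m).aestronglyMeasurable
  · refine Eventually.of_forall fun β y hy => ?_
    obtain ⟨hy1, -, hy3⟩ := hy
    have him : |((β : ℂ) - Complex.I * y.2).im + x.2| < min ε δ := by
      rw [← abs_neg]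
      convert hy3 using 2
      simp
      ring
    have b1 := (hC _ (him.trans_le (min_le_left _ _))).2
    have b2 := (hD _ (him.trans_le (min_le_right _ _))).2
    have c1 := (norm_nonneg _).trans b1
    have c2 := (norm_nonneg _).trans b2
    have hch := Real.cosh_pos β
    have hexp : Real.exp (-(ω.im * y.1 * Real.cosh β))
        ≤ Real.exp (-(ω.im * (x.1 / 2) * Real.cosh β)) := by
      gcongr
    refine (norm_add_le _ _).trans (add_le_add ((norm_L₁_le _).trans ?_) ((norm_L₂_le _).trans ?_))
    · rw [norm_mul, norm_mul, norm_mul, norm_mul, norm_exp_phase, norm_pow, Complex.norm_real,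
        Real.norm_of_nonneg hch.le, Complex.norm_I, one_mul, ← mul_assoc ‖ω‖]
      gcongr
    · rw [norm_mul, norm_mul, norm_mul, norm_exp_phase, norm_pow, Complex.norm_real,
        Real.norm_of_nonneg hch.le, norm_neg, Complex.norm_I, one_mul]
      gcongr
  · exact Eventually.of_forall fun β y hy => hasFDerivAt_integrand ω m β hy.2.1

/-- Since the partial derivatives of `J` are again of the form `J`, differentiability of every
member of the family gives smoothness of every member. -/
lemma contDiffOn_J {ω : ℂ} (hω : 0 < ω.im) {S : Set (ℝ × ℝ)} (hS : IsOpen S)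
    (hpos : ∀ x ∈ S, 0 < x.1) (n : ℕ) :
    ∀ (G : ℂ → ℂ) (m : ℕ), (∀ x ∈ S, StripBdd G x.2) → ContDiffOn ℝ n (J ω G m) S := by
  induction n with
  | zero =>
    intro G m hG
    simp only [Nat.cast_zero, contDiffOn_zero]
    exact fun x hx => (hasFDerivAt_J hω m (hpos x hx) (hG x hx)).continuousAt.continuousWithinAt
  | succ n ih =>
    intro G m hG
    push_cast
    rw [contDiffOn_succ_iff_hasFDerivWithinAt_of_uniqueDiffOn hS.uniqueDiffOn]
    refine ⟨by simp, _, ?_, fun x hx =>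
      (hasFDerivAt_J hω m (hpos x hx) (hG x hx)).hasFDerivWithinAt⟩
    have h1 := ih G (m + 1) hG
    have h2 := ih (deriv G) m fun x hx => (hG x hx).deriv
    exact (L₁.contDiff.comp_contDiffOn (contDiffOn_const.mul h1)).add
      (L₂.contDiff.comp_contDiffOn (contDiffOn_const.mul h2))

lemma hasDerivAt_J_fst {ω : ℂ} (hω : 0 < ω.im) {G : ℂ → ℂ} (m : ℕ) {ρ φ : ℝ} (hρ : 0 < ρ)
    (hG : StripBdd G φ) :
    HasDerivAt (fun r => J ω G m (r, φ)) (Complex.I * ω * J ω G (m + 1) (ρ, φ)) ρ := by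
  have h := (hasFDerivAt_J hω m (x := (ρ, φ)) hρ hG).comp_hasDerivAt ρ
    ((hasDerivAt_id ρ).prodMk (hasDerivAt_const ρ φ))
  exact h.congr_deriv (by simp [L₁_apply, L₂_apply])

lemma hasDerivAt_J_snd {ω : ℂ} (hω : 0 < ω.im) {G : ℂ → ℂ} (m : ℕ) {ρ φ : ℝ} (hρ : 0 < ρ)
    (hG : StripBdd G φ) :
    HasDerivAt (fun t => J ω G m (ρ, t)) (-Complex.I * J ω (deriv G) m (ρ, φ)) φ := by
  have h := (hasFDerivAt_J hω m (x := (ρ, φ)) hρ hG).comp_hasDerivAt φ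
    ((hasDerivAt_const φ ρ).prodMk (hasDerivAt_id φ))
  exact h.congr_deriv (by simp [L₁_apply, L₂_apply])

/-! ### Integration by parts -/

/-- Two integrations by parts in `β`: with `E = e^{iωρ cosh β}` this is `∫ G'' E = ∫ G E''`, where
`E'' = ((iωρ)² cosh² β + iωρ cosh β + (ωρ)²) E`. -/
lemma J_deriv_deriv {ω : ℂ} (hω : 0 < ω.im) {G : ℂ → ℂ} {ρ φ : ℝ} (hρ : 0 < ρ)
    (hG : StripBdd G φ) :
    J ω (deriv (deriv G)) 0 (ρ, φ) = (Complex.I * ω * ρ) ^ 2 * J ω G 2 (ρ, φ)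
      + Complex.I * ω * ρ * J ω G 1 (ρ, φ) + (ω * ρ) ^ 2 * J ω G 0 (ρ, φ) := by
  set E : ℝ → ℂ := fun β => Complex.exp (Complex.I * ω * (ρ : ℂ) * (Real.cosh β : ℂ)) with hE
  have hch : ∀ β : ℝ, HasDerivAt (fun b : ℝ => (Real.cosh b : ℂ)) (Real.sinh β : ℂ) β :=
    fun β => (Real.hasDerivAt_cosh β).ofReal_comp
  have hsh : ∀ β : ℝ, HasDerivAt (fun b : ℝ => (Real.sinh b : ℂ)) (Real.cosh β : ℂ) β :=
    fun β => (Real.hasDerivAt_sinh β).ofReal_comp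
  have hdE : ∀ β : ℝ, HasDerivAt E (E β * (Complex.I * ω * ρ * (Real.sinh β : ℂ))) β :=
    fun β => ((hch β).const_mul (Complex.I * ω * (ρ : ℂ))).cexp
  have i0 := integrable_J hω hρ hG 0
  have i1 := integrable_J hω hρ hG 1
  have i2 := integrable_J hω hρ hG 2
  have id2 := integrable_J hω hρ hG.deriv.deriv 0
  have id1 := integrable_J hω hρ hG.deriv 0
  have is1 := integrable_kernel hω hρ hG 1 (h := fun β => (Real.sinh β : ℂ)) (by fun_prop)
    fun β => by
      rw [Complex.norm_real, Real.norm_eq_abs, pow_one]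
      refine abs_le_of_sq_le_sq ?_ (Real.cosh_pos β).le
      rw [Real.cosh_sq]
      linarith
  have iR := (((i2.const_mul ((Complex.I * ω * ρ) ^ 2)).add
    (i1.const_mul (Complex.I * ω * ρ))).add (i0.const_mul ((ω * ρ) ^ 2)))
  have hz := integral_eq_zero_of_hasDerivAt_of_integrable
    (f := fun β : ℝ => Complex.I * ω * ρ * (G (β - Complex.I * φ) * ((Real.sinh β : ℂ) * E β))
      - deriv G (β - Complex.I * φ) * ((Real.cosh β : ℂ) ^ 0 * E β))
    (fun β => ?_) (iR.sub id2) ((is1.const_mul _).sub id1)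
  · rw [integral_sub' iR id2, integral_add' ((i2.const_mul _).add (i1.const_mul _))
      (i0.const_mul _), integral_add' (i2.const_mul _) (i1.const_mul _), integral_const_mul,
      integral_const_mul, integral_const_mul] at hz
    exact (sub_eq_zero.1 hz).symm
  · have h1 := hG.hasDerivAt_line β
    have h2 := hG.deriv.hasDerivAt_line β
    have := ((h1.mul ((hsh β).mul (hdE β))).const_mul (Complex.I * ω * ρ)).sub
      (h2.mul ((hdE β).const_mul ((Real.cosh β : ℂ) ^ 0)))
    simp only [pow_zero] at this ⊢
    refine this.congr_deriv ?_
    have hsq : (Real.cosh β : ℂ) ^ 2 = (Real.sinh β : ℂ) ^ 2 + 1 := by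
      exact_mod_cast congrArg (fun t : ℝ => (t : ℂ)) (Real.cosh_sq β)
    simp only [Pi.sub_apply, Pi.add_apply, Pi.mul_apply]
    change _ = (Complex.I * ω * ρ) ^ 2 * (G (β - Complex.I * φ) * ((Real.cosh β : ℂ) ^ 2 * E β))
      + Complex.I * ω * ρ * (G (β - Complex.I * φ) * ((Real.cosh β : ℂ) ^ 1 * E β))
      + (ω * ρ) ^ 2 * (G (β - Complex.I * φ) * (1 * E β))
      - deriv (deriv G) (β - Complex.I * φ) * (1 * E β)
    linear_combination (-(Complex.I * ω * ρ) ^ 2 * G (β - Complex.I * φ) * E β) * hsq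
      - (ω * ρ) ^ 2 * G (β - Complex.I * φ) * E β * Complex.I_sq

/-! ### The Helmholtz equation -/

/-- The diffracted-wave integral `A_d(ρ,φ) = ∫_ℝ 𝒵(β,φ) e^{iωρ cosh β} dβ` is twice
continuously differentiable on `{ρ > 0, φ ∈ (0,2π) \ {φ₊,φ₋}}` and satisfies the Helmholtz
equation in polar coordinates `∂²_ρ A_d + ρ⁻¹ ∂_ρ A_d + ρ⁻² ∂²_φ A_d + ω² A_d = 0`. -/
theorem diffracted_integral_helmholtz (α : ℝ) (hα : α ∈ Set.Ioo (π/2) π)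
    (ω : ℂ) (hω : 0 < ω.im) (A : ℝ → ℝ → ℂ)
    (hA : ∀ ρ φ : ℝ, A ρ φ = ∫ β : ℝ, Zker α β φ *
        Complex.exp (Complex.I * ω * (ρ : ℂ) * (Real.cosh β : ℂ))) :
    ContDiffOn ℝ 2 (fun x : ℝ × ℝ => A x.1 x.2)
      {x : ℝ × ℝ | 0 < x.1 ∧ x.2 ∈ Set.Ioo (0:ℝ) (2*π) ∧ x.2 ≠ π + α ∧ x.2 ≠ π - α} ∧
    ∀ ρ φ : ℝ, 0 < ρ → φ ∈ Set.Ioo (0:ℝ) (2*π) → φ ≠ π + α → φ ≠ π - α →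
      deriv (fun r : ℝ => deriv (fun r' : ℝ => A r' φ) r) ρ
        + (ρ : ℂ)⁻¹ * deriv (fun r : ℝ => A r φ) ρ
        + ((ρ : ℂ)^2)⁻¹ * deriv (fun t : ℝ => deriv (fun t' : ℝ => A ρ t') t) φ
        + ω^2 * A ρ φ = 0 := by
  set G : ℂ → ℂ := fun z => Zfun α (z + 2 * (π : ℝ) * Complex.I) with hGdef
  have hAJ : ∀ ρ φ : ℝ, A ρ φ = J ω G 0 (ρ, φ) := by
    intro ρ φ
    rw [hA, J]
    congr 1
    ext β
    simp only [pow_zero, one_mul, hGdef, Zker]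
    ring_nf
  have hG : ∀ φ : ℝ, φ ∈ Set.Ioo (0:ℝ) (2*π) → φ ≠ π + α → φ ≠ π - α → StripBdd G φ :=
    fun φ h h1 h2 => stripBdd_kernel hα h h1 h2
  simp only [hAJ]
  constructor
  · have hS : IsOpen {x : ℝ × ℝ | 0 < x.1 ∧ x.2 ∈ Set.Ioo (0:ℝ) (2*π) ∧ x.2 ≠ π + α ∧
        x.2 ≠ π - α} := by
      refine (isOpen_lt continuous_const continuous_fst).inter
        ((isOpen_Ioo.preimage continuous_snd).inter ?_)
      exact (isOpen_ne_fun continuous_snd continuous_const).inter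
        (isOpen_ne_fun continuous_snd continuous_const)
    exact contDiffOn_J hω hS (fun x hx => hx.1) 2 G 0
      fun x hx => hG x.2 hx.2.1 hx.2.2.1 hx.2.2.2
  · intro ρ φ hρ hφ h1 h2
    have hs := hG φ hφ h1 h2
    have hρ0 : (ρ : ℂ) ≠ 0 := by exact_mod_cast hρ.ne'
    -- The first derivatives must be known on a neighbourhood before differentiating again.
    have e1 : (fun r : ℝ => deriv (fun r' : ℝ => J ω G 0 (r', φ)) r) =ᶠ[nhds ρ]
        fun r => Complex.I * ω * J ω G 1 (r, φ) := by
      filter_upwards [lt_mem_nhds hρ] with r hr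
      exact (hasDerivAt_J_fst hω 0 hr hs).deriv
    have e2 : (fun t : ℝ => deriv (fun t' : ℝ => J ω G 0 (ρ, t')) t) =ᶠ[nhds φ]
        fun t => -Complex.I * J ω (deriv G) 0 (ρ, t) := by
      filter_upwards [hs.eventually] with t ht
      exact (hasDerivAt_J_snd hω 0 hρ ht).deriv
    rw [e1.deriv_eq, e2.deriv_eq, (hasDerivAt_J_fst hω 0 hρ hs).deriv,
      ((hasDerivAt_J_fst hω 1 hρ hs).const_mul _).deriv,
      ((hasDerivAt_J_snd hω 0 hρ hs.deriv).const_mul _).deriv, J_deriv_deriv hω hρ hs]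
    field_simp
    ring_nf
    simp only [Complex.I_sq, Complex.I_pow_four, Complex.I_pow_three]
    ring
end
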